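/- arXiv:2111.02179 — 2 statements merged into one kernel-verified Lean document; each statement's English description precedes it below -/
import Mathlib

section
/- Let (A, φ) be a noncommutative probability space with monotone cumulants {h_n} and Boolean cumulants {b_n}. Then for every n ≥ 1 and all a_1,…,a_n ∈ A, h_n(a_1,…,a_n) = Σ_{π ∈ NC_irr(n)} ω(t(π)) · b_π(a_1,…,a_n). -/
open scoped BigOperators

/-- Planar rooted trees (rose trees). -/
inductive PTree : Type
  | node : List PTree → PTree

namespace PTree

/-- The single-vertex tree (a leaf). -/
abbrev leaf : PTree := .node []

/-- Subtree at a given path from the root (entries select children). -/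
def subtreeAt : List ℕ → PTree → Option PTree
  | [], t => some t
  | i :: p, node cs => (cs[i]?).bind (subtreeAt p)

/-- `p` is (the path of) a vertex of `t`. -/
def IsVertex (t : PTree) (p : List ℕ) : Prop := (subtreeAt p t).isSome

/-- `p` is a leaf of `t`. -/
def IsLeafAt (t : PTree) (p : List ℕ) : Prop := subtreeAt p t = some leaf

/-- `p` is an internal (non-leaf) vertex of `t`. -/
def IsInternalAt (t : PTree) (p : List ℕ) : Prop :=
  ∃ cs, subtreeAt p t = some (node cs) ∧ cs ≠ []

/-- Schröder trees: every internal vertex has at least two children. -/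
inductive IsSchroder : PTree → Prop
  | leaf : IsSchroder (node [])
  | node (cs : List PTree) : 2 ≤ cs.length → (∀ c ∈ cs, IsSchroder c) → IsSchroder (node cs)

/-- Number of leaves of a tree. -/
noncomputable def numLeaves (t : PTree) : ℕ := Nat.card {p : List ℕ // IsLeafAt t p}

/-- Number of sectors between consecutive leaves. -/
noncomputable def numSectors (t : PTree) : ℕ := numLeaves t - 1

/-- Number of internal vertices. -/
noncomputable def numInternal (t : PTree) : ℕ := Nat.card {p : List ℕ // IsInternalAt t p}

/-- The set of Schröder trees with `n+1` leaves. -/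
def ST (n : ℕ) : Set PTree := {t | IsSchroder t ∧ numLeaves t = n + 1}

/-- Number of surjective strictly order-preserving maps from the poset of internal
vertices of `t` (i.e. the vertex poset of the skeleton `sk(t)`, with the root minimal,
the order being the ancestor/prefix order) onto `{1, …, k}`. This is `ω_k(sk(t))`. -/
noncomputable def omegaSkK (t : PTree) (k : ℕ) : ℕ :=
  Nat.card {f : {p : List ℕ // IsInternalAt t p} → Fin k //
    Function.Surjective f ∧ ∀ v w, v.1 <+: w.1 → v ≠ w → f v < f w}

/-- The Murua coefficient `ω(sk(t))` of the skeleton of `t`. -/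
noncomputable def omegaSk (t : PTree) : ℂ :=
  ∑ k ∈ Finset.Icc 1 (numInternal t), ((-1 : ℂ) ^ (k + 1) / (k : ℂ)) * (omegaSkK t k : ℂ)

/-- The subtree of `t` at path `p` (junk value: a leaf). -/
noncomputable def subtree! (t : PTree) (p : List ℕ) : PTree := (subtreeAt p t).getD leaf

/-- Number of leaves of `t` strictly to the left of the subtree at `p`. -/
noncomputable def leavesBefore (t : PTree) (p : List ℕ) : ℕ :=
  Nat.card {q : List ℕ // IsLeafAt t q ∧ List.Lex (· < ·) q p ∧ ¬ p <+: q}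

/-- Sector number `i` (0-indexed: the sector between the `(i+1)`-st and `(i+2)`-nd leaves of `t`)
lies strictly inside the subtree of `t` rooted at `p`. -/
def SectorIn (t : PTree) (p : List ℕ) (i : ℕ) : Prop :=
  leavesBefore t p ≤ i ∧ i + 2 ≤ leavesBefore t p + numLeaves (subtree! t p)

/-- The internal vertex `v` of `t` owns sector `i`: the sector lies in the corolla at `v`,
i.e. inside the subtree at `v` but not inside the subtree at any strictly deeper vertex. -/
def OwnsSector (t : PTree) (v : List ℕ) (i : ℕ) : Prop :=
  IsInternalAt t v ∧ SectorIn t v i ∧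
    ∀ w, IsInternalAt t w → v <+: w → w ≠ v → ¬ SectorIn t w i

/-- Sectors `i` and `j` belong to the same block of the noncrossing partition `π(t)`. -/
def SameOwner (t : PTree) (i j : ℕ) : Prop := ∃ v, OwnsSector t v i ∧ OwnsSector t v j

open Classical in
/-- `φ_{π(t)}(a_1,…,a_n)`: the product over the blocks of the noncrossing partition `π(t)`
(one block per internal vertex `v`, consisting of the sectors owned by `v`) of `φ` applied to
the ordered product of the corresponding letters of `w`. -/
noncomputable def phiPi {A : Type*} [Ring A] (φ : A → ℂ) (t : PTree) (w : List A) : ℂ :=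
  ∏ᶠ v ∈ {v : List ℕ | IsInternalAt t v},
    φ ((((List.range w.length).filter fun i => OwnsSector t v i).map fun i => w.getD i 0).prod)

/-- A corolla: a root whose (at least two) children are all leaves. -/
def corolla (m : ℕ) : PTree := node (List.replicate m leaf)

/-- `t` is a corolla. -/
def IsCorolla (t : PTree) : Prop := ∃ m, 2 ≤ m ∧ t = corolla m

/-- Graft a tree `s` onto the leftmost leaf of `t`. -/
def graftLeftmost : PTree → PTree → PTree
  | node [], s => s
  | node (c :: cs), s => node (graftLeftmost c s :: cs)

/-- Trees obtained from the single-vertex tree by repeatedly grafting a corolla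
onto the leftmost leaf. -/
inductive IsBST : PTree → Prop
  | single : IsBST leaf
  | graft (t : PTree) (m : ℕ) : IsBST t → 2 ≤ m → IsBST (graftLeftmost t (corolla m))

/-- Schröder trees whose leftmost child of the root is a leaf. -/
def IsPST (t : PTree) : Prop := ∃ cs, t = node (leaf :: cs)

end PTree
section Partitions

open scoped BigOperators

/-- Set partitions of `[n] = {1,…,n}`, modeled as finpartitions of `Fin n`. -/
abbrev NPart (n : ℕ) := Finpartition (Finset.univ : Finset (Fin n))

/-- Noncrossing partitions: there are no `a < b < c < d` with `a, c` in one block and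
`b, d` in a different block. -/
def IsNoncrossing {n : ℕ} (π : NPart n) : Prop :=
  ∀ a b c d : Fin n, a < b → b < c → c < d →
    ∀ V ∈ π.parts, ∀ W ∈ π.parts, a ∈ V → c ∈ V → b ∈ W → d ∈ W → V = W

/-- Interval partitions: every block is an interval of consecutive elements. -/
def IsIntervalPart {n : ℕ} (π : NPart n) : Prop :=
  ∀ V ∈ π.parts, ∀ x ∈ V, ∀ y ∈ V, ∀ z : Fin n, x ≤ z → z ≤ y → z ∈ V

/-- Irreducible noncrossing partitions: `1` and `n` lie in the same block. -/
def IsIrreducibleNC {n : ℕ} (π : NPart n) : Prop :=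
  ∃ V ∈ π.parts, (∀ i : Fin n, i.val = 0 → i ∈ V) ∧ (∀ i : Fin n, i.val = n - 1 → i ∈ V)

/-- `W` is nested in `V`: every element of `W` lies in the interval `[min V, max V]`. -/
def NestedIn {n : ℕ} (W V : Finset (Fin n)) : Prop :=
  ∀ w ∈ W, (∃ a ∈ V, a ≤ w) ∧ (∃ b ∈ V, w ≤ b)

open Classical in
/-- The forest factorial `t(π)!` of the forest of nestings of `π`: the product, over all
blocks `V`, of the number of blocks nested in `V` (the size of the subtree rooted at `V`). -/
noncomputable def forestFactorial {n : ℕ} (π : NPart n) : ℕ :=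
  ∏ V ∈ π.parts, (π.parts.filter fun W => NestedIn W V).card

/-- `f_π(a_1,…,a_n)`: the product over the blocks `V = {i_1 < … < i_s}` of `π` of
`f(a_{i_1},…,a_{i_s})`, for a family of multilinear functionals encoded as `f : List A → ℂ`. -/
noncomputable def blockApply {A : Type*} {n : ℕ} (f : List A → ℂ) (a : Fin n → A)
    (π : NPart n) : ℂ :=
  ∏ V ∈ π.parts, f ((V.sort (· ≤ ·)).map a)

/-- `φ_π(a_1,…,a_n)` for the moment functionals `φ_m(a_1,…,a_m) = φ(a_1 ⋯ a_m)`. -/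
noncomputable def momApply {A : Type*} [Ring A] {n : ℕ} (φ : A → ℂ) (a : Fin n → A)
    (π : NPart n) : ℂ :=
  blockApply (fun l => φ l.prod) a π

/-- `ω_k(t(π))` for the nesting poset of the blocks of `π` (for irreducible `π`, this is
the vertex poset of the tree of nestings, rooted at the outermost block): the number of
surjective strictly order-preserving maps onto `{1,…,k}`. -/
noncomputable def omegaNestK {n : ℕ} (π : NPart n) (k : ℕ) : ℕ :=
  Nat.card {f : {V // V ∈ π.parts} → Fin k // Function.Surjective f ∧
    ∀ V W : {V // V ∈ π.parts}, NestedIn W.1 V.1 → V ≠ W → f V < f W}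

/-- The Murua coefficient `ω(t(π))` of the tree (forest) of nestings of `π`. -/
noncomputable def omegaNest {n : ℕ} (π : NPart n) : ℂ :=
  ∑ k ∈ Finset.Icc 1 π.parts.card, ((-1 : ℂ) ^ (k + 1) / (k : ℂ)) * (omegaNestK π k : ℂ)

/-- The noncrossing partition `π(t)` associated to a Schröder tree `t ∈ ST(n)` equals `π`:
two sectors lie in the same block of `π(t)` (i.e. have the same owning internal vertex)
iff they lie in the same block of `π`. -/
def TreePartEq {n : ℕ} (t : PTree) (π : NPart n) : Prop :=
  ∀ i j : Fin n, PTree.SameOwner t i.val j.val ↔ ∃ V ∈ π.parts, i ∈ V ∧ j ∈ V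

/-- The moment–cumulant relation defining the monotone cumulants `h`. -/
def MonotoneMC {A : Type*} [Ring A] (φ : A → ℂ) (h : List A → ℂ) : Prop :=
  ∀ (m : ℕ), 1 ≤ m → ∀ a : Fin m → A,
    φ (List.ofFn a).prod =
      ∑ᶠ π ∈ {π : NPart m | IsNoncrossing π}, (forestFactorial π : ℂ)⁻¹ * blockApply h a π

/-- The moment–cumulant relation defining the free cumulants `r`. -/
def FreeMC {A : Type*} [Ring A] (φ : A → ℂ) (r : List A → ℂ) : Prop :=
  ∀ (m : ℕ), 1 ≤ m → ∀ a : Fin m → A,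
    φ (List.ofFn a).prod = ∑ᶠ π ∈ {π : NPart m | IsNoncrossing π}, blockApply r a π

/-- The moment–cumulant relation defining the Boolean cumulants `b`. -/
def BooleanMC {A : Type*} [Ring A] (φ : A → ℂ) (b : List A → ℂ) : Prop :=
  ∀ (m : ℕ), 1 ≤ m → ∀ a : Fin m → A,
    φ (List.ofFn a).prod = ∑ᶠ π ∈ {π : NPart m | IsIntervalPart π}, blockApply b a π

end Partitions

/-!
Call `F_x(U, S)` the sum of `f_P W_x(P)` over the noncrossing partitions `P` of a set `U` of letters
none of whose blocks is split by a letter of `S`, where `W_x(P)` is a polynomial in `x` that depends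
only on the forest of nestings of `P`. If `W_x(P)` is `x ^ |P| / t(P)!`, or if it is the number of
strictly order-preserving maps `P → {1, …, x}`, then `d/dx W_x(P)` is a sum over the ways of cutting
off outer blocks, and `F` becomes a one-parameter convolution semigroup. Its generator is the
coefficient of `x`: for the first weight and `f = h` it is `h` itself, for the second weight and
`f = b` it is the sum of `ω(t(P)) b_P`, because `ω` is the linear coefficient of the strict order
polynomial. At `x = 1` both semigroups give the moments, as the order polynomial at `1` is the
indicator of the partitions without nestings, which are the interval partitions. A semigroup is
determined by its value at `1`, so the generators agree. Reducible partitions do not contribute to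
the second one: the order polynomial is multiplicative on disjoint forests and vanishes at `0`.
-/

section MonotoneBoolean

open Finset Polynomial

section Polynomials

variable {R : Type*}

lemma coeff_one_descPochhammer_succ [CommRing R] (k : ℕ) :
    (descPochhammer R (k + 1)).coeff 1 = (-1) ^ k * k.factorial := by
  have h := ascPochhammer_eval_neg_eq_descPochhammer R (-1) k
  rw [neg_neg, ascPochhammer_eval_one] at h
  rw [descPochhammer_succ_left, coeff_X_mul, coeff_zero_eq_eval_zero, eval_comp]
  simp [h, ← mul_assoc, ← mul_pow]

lemma polynomial_eq_of_eval_natCast [CommRing R] [IsDomain R] [CharZero R] {p q : R[X]}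
    (h : ∀ x : ℕ, p.eval (x : R) = q.eval (x : R)) : p = q :=
  eq_of_infinite_eval_eq p q <|
    (Set.infinite_range_of_injective Nat.cast_injective).mono (Set.range_subset_iff.2 h)

variable [Ring R] [IsAddTorsionFree R] {p q : R[X]}

lemma polynomial_eq_of_derivative_eq (h : derivative p = derivative q)
    (h0 : p.coeff 0 = q.coeff 0) : p = q := by
  have hpq := eq_C_of_derivative_eq_zero (p := p - q) (by rw [derivative_sub, h, sub_self])
  rwa [coeff_sub, h0, sub_self, C_0, sub_eq_zero] at hpq

lemma eq_zero_of_derivative_eq_add_C {c : R} (h : derivative p = derivative q + C c)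
    (h0 : p.coeff 0 = q.coeff 0) (h1 : p.eval 1 = q.eval 1) : c = 0 := by
  have hpq : p = q + C c * X := polynomial_eq_of_derivative_eq (by simp [h]) (by simp [h0])
  simpa [h1] using congrArg (eval 1) hpq

end Polynomials

section StrictMaps

variable {α : Type*} (r : α → α → Prop)

open Classical in
/-- The subsets of `s` that contain, with each element `b`, every `a ∈ s` with `r a b`: the
lower subsets of `s` when `r` is an order. -/
noncomputable def lowerSubsets (s : Finset α) : Finset (Finset α) :=
  s.powerset.filter fun D => ∀ b ∈ D, ∀ a ∈ s, r a b → a ∈ D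

open Classical in
/-- The maps `c : s → {0, …, x - 1}` with `c a < c b` whenever `r a b` and `a ≠ b`, encoded as
finitely supported functions that vanish outside `s`. -/
noncomputable def strictMaps (s : Finset α) (x : ℕ) : Finset (α →₀ ℕ) :=
  (s.finsupp fun _ => range x).filter fun c => ∀ a ∈ s, ∀ b ∈ s, r a b → a ≠ b → c a < c b

/-- The number of surjective strictly order-preserving maps `s → {0, …, k - 1}`. -/
noncomputable def surjCount (s : Finset α) (k : ℕ) : ℕ :=
  Nat.card {f : {a // a ∈ s} → Fin k // Function.Surjective f ∧
    ∀ a b : {a // a ∈ s}, r a b → a ≠ b → f a < f b}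

variable {r} {s t : Finset α} {x y k : ℕ} {c : α →₀ ℕ}

lemma mem_lowerSubsets {D : Finset α} :
    D ∈ lowerSubsets r s ↔ D ⊆ s ∧ ∀ b ∈ D, ∀ a ∈ s, r a b → a ∈ D := by
  simp [lowerSubsets]

lemma mem_strictMaps :
    c ∈ strictMaps r s x ↔ (∀ a ∉ s, c a = 0) ∧ (∀ a ∈ s, c a < x) ∧
      ∀ a ∈ s, ∀ b ∈ s, r a b → a ≠ b → c a < c b := by
  have : c.support ⊆ s ↔ ∀ a ∉ s, c a = 0 := by grind
  simp [strictMaps, mem_finsupp_iff, this, and_assoc]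

lemma strictMaps_zero (hs : s.Nonempty) : strictMaps r s 0 = ∅ := by
  obtain ⟨a, ha⟩ := hs
  exact eq_empty_of_forall_notMem fun c hc => Nat.not_lt_zero _ ((mem_strictMaps.1 hc).2.1 a ha)

lemma strictMaps_empty : strictMaps r ∅ x = {0} := by
  ext c
  simp [mem_strictMaps, Finsupp.ext_iff]

open Classical in
lemma card_strictMaps_one :
    #(strictMaps r s 1) = if ∀ a ∈ s, ∀ b ∈ s, r a b → a = b then 1 else 0 := by
  split_ifs with h
  · refine card_eq_one.2 ⟨0, ?_⟩
    ext c
    simp only [mem_strictMaps, mem_singleton, Finsupp.ext_iff, Finsupp.zero_apply]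
    grind
  · refine card_eq_zero.2 (eq_empty_of_forall_notMem fun c hc => ?_)
    grind [mem_strictMaps]

lemma card_strictMaps_union [DecidableEq α] (hst : Disjoint s t)
    (h : ∀ a ∈ s, ∀ b ∈ t, ¬ r a b ∧ ¬ r b a) :
    #(strictMaps r (s ∪ t) x) = #(strictMaps r s x) * #(strictMaps r t x) := by
  rw [← card_product]
  refine card_bij'
    (fun c _ => (Finsupp.indicator s fun a _ => c a, Finsupp.indicator t fun a _ => c a))
    (fun c _ => c.1 + c.2) ?_ ?_ ?_ ?_
  all_goals
    have := disjoint_left.1 hst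
    simp only [mem_product, mem_strictMaps, Prod.forall, Prod.ext_iff, Finsupp.ext_iff,
      Finsupp.indicator_apply, Finsupp.add_apply]
    grind

/-- A strict map to `{0, …, x + y - 1}` is cut at level `x`. -/
lemma card_strictMaps_add [DecidableEq α] :
    #(strictMaps r s (x + y)) =
      ∑ D ∈ lowerSubsets r s, #(strictMaps r D x) * #(strictMaps r (s \ D) y) := by
  simp_rw [← card_product]
  rw [← card_sigma]
  refine card_bij'
    (fun c _ => ⟨s.filter (c · < x), Finsupp.indicator (s.filter (c · < x)) fun a _ => c a,
      Finsupp.indicator (s \ s.filter (c · < x)) fun a _ => c a - x⟩)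
    (fun d _ => d.2.1 + d.2.2 + Finsupp.indicator (s \ d.1) fun _ _ => x) ?_ ?_ ?_ ?_
  · simp only [mem_sigma, mem_product, mem_strictMaps, mem_lowerSubsets, Finsupp.indicator_apply]
    grind
  · rintro ⟨D, c, d⟩
    simp only [mem_sigma, mem_product, mem_strictMaps, mem_lowerSubsets, Finsupp.indicator_apply,
      Finsupp.add_apply]
    grind
  · simp only [mem_strictMaps, Finsupp.ext_iff, Finsupp.indicator_apply, Finsupp.add_apply]
    grind
  · rintro ⟨D, c, d⟩ h
    simp only [mem_sigma, mem_product, mem_strictMaps, mem_lowerSubsets] at h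
    have hD : s.filter ((c + d + Finsupp.indicator (s \ D) fun _ _ => x) · < x) = D := by
      ext a
      simp only [mem_filter, Finsupp.indicator_apply, Finsupp.add_apply]
      grind
    simp only [Sigma.mk.injEq, heq_eq_eq, Prod.ext_iff, Finsupp.ext_iff,
      Finsupp.indicator_apply, Finsupp.add_apply]
    grind

lemma surjCount_eq_zero (hk : #s < k) : surjCount r s k = 0 := by
  have : IsEmpty {f : {a // a ∈ s} → Fin k // Function.Surjective f ∧
      ∀ a b : {a // a ∈ s}, r a b → a ≠ b → f a < f b} := by
    refine ⟨fun f => hk.not_ge ?_⟩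
    simpa using Fintype.card_le_of_surjective f.1 f.2.1
  exact Nat.card_of_isEmpty

lemma card_filter_strictMaps_image_eq {R : Finset ℕ} (hR : R ⊆ range x) :
    #{c ∈ strictMaps r s x | s.image (c ·) = R} = surjCount r s #R := by
  rw [surjCount, ← Nat.card_eq_finsetCard]
  classical
  let e := R.orderIsoOfFin rfl
  have hmem (c : α →₀ ℕ) : c ∈ {c ∈ strictMaps r s x | s.image (c ·) = R} ↔
      c ∈ strictMaps r s x ∧ (∀ a ∈ s, c a ∈ R) ∧ ∀ i ∈ R, ∃ a ∈ s, c a = i := by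
    rw [mem_filter, Subset.antisymm_iff, image_subset_iff]
    simp only [subset_iff, mem_image]
  refine Nat.card_congr
    { toFun := fun c => ⟨fun a => e.symm ⟨c.1 a, ((hmem c).1 c.2).2.1 a a.2⟩, ?_, ?_⟩
      invFun := fun f => ⟨Finsupp.indicator s fun a ha => (e (f.1 ⟨a, ha⟩) : ℕ), ?_⟩
      left_inv := ?_
      right_inv := ?_ }
  · intro i
    obtain ⟨a, ha, hai⟩ := ((hmem c).1 c.2).2.2 (e i) (e i).2
    exact ⟨⟨a, ha⟩, by simp [hai]⟩
  · intro a b hab hne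
    have := (mem_strictMaps.1 ((hmem c).1 c.2).1).2.2 a a.2 b b.2 hab (by simpa using hne)
    simpa using this
  · obtain ⟨f, hsurj, hmono⟩ := f
    refine (hmem _).2 ⟨mem_strictMaps.2 ⟨fun a ha => by simp [Finsupp.indicator_apply, ha],
      fun a ha => ?_, ?_⟩,
      fun a ha => by simp [Finsupp.indicator_apply, ha], fun i hi => ?_⟩
    · simpa [Finsupp.indicator_apply, ha] using hR (e (f ⟨a, ha⟩)).2
    · intro a ha b hb hab hne
      simpa [Finsupp.indicator_apply, ha, hb] using hmono ⟨a, ha⟩ ⟨b, hb⟩ hab (by simpa using hne)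
    · obtain ⟨⟨a, ha⟩, hai⟩ := hsurj (e.symm ⟨i, hi⟩)
      exact ⟨a, ha, by simp [Finsupp.indicator_apply, ha, hai]⟩
  · intro c
    ext a
    by_cases ha : a ∈ s
    · simp [Finsupp.indicator_apply, ha]
    · simp [Finsupp.indicator_apply, ha,
        (mem_strictMaps.1 ((hmem c).1 c.2).1).1 a ha]
  · rintro ⟨f, hf⟩
    ext a
    simp [Finsupp.indicator_apply]

lemma card_strictMaps_eq_sum_choose :
    #(strictMaps r s x) = ∑ k ∈ range (#s + 1), surjCount r s k * x.choose k := by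
  have himage : ∀ c ∈ strictMaps r s x, s.image (c ·) ∈ (range x).powerset := by
    grind [mem_strictMaps]
  have hfiber : #(strictMaps r s x) = ∑ k ∈ range (x + 1), surjCount r s k * x.choose k := by
    rw [card_eq_sum_card_fiberwise himage,
      sum_congr rfl fun R hR => card_filter_strictMaps_image_eq (mem_powerset.1 hR),
      sum_powerset_apply_card, card_range]
    simp only [smul_eq_mul, mul_comm]
  rw [hfiber]
  apply sum_congr_of_eq_on_inter <;> intro k _ hk
  · rw [surjCount_eq_zero (by simpa using hk), zero_mul]
  · rw [Nat.choose_eq_zero_of_lt (by simpa using hk), mul_zero]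
  · rfl

end StrictMaps

section OrderPolynomial

variable {α : Type*} (K : Type*) [Field K] (r : α → α → Prop)

/-- The strict order polynomial of `s`, whose value at a natural number `x` is the number of
strictly order-preserving maps `s → {0, …, x - 1}`, written in the basis of binomial
coefficients `X.choose k`. -/
noncomputable def orderPolynomial (s : Finset α) : K[X] :=
  ∑ k ∈ range (#s + 1), C ((surjCount r s k : K) / k.factorial) * descPochhammer K k

variable {K r} {s t : Finset α}

variable [CharZero K]

lemma eval_natCast_orderPolynomial (x : ℕ) :
    (orderPolynomial K r s).eval (x : K) = #(strictMaps r s x) := by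
  simp only [orderPolynomial, card_strictMaps_eq_sum_choose, eval_finsetSum, eval_C_mul,
    descPochhammer_eval_eq_descFactorial, Nat.cast_sum, Nat.cast_mul,
    Nat.descFactorial_eq_factorial_mul_choose]
  refine sum_congr rfl fun k _ => ?_
  have := Nat.cast_ne_zero (R := K).2 k.factorial_ne_zero
  field_simp

open Classical in
lemma eval_one_orderPolynomial :
    (orderPolynomial K r s).eval 1 = if ∀ a ∈ s, ∀ b ∈ s, r a b → a = b then 1 else 0 := by
  rw [← Nat.cast_one, eval_natCast_orderPolynomial, card_strictMaps_one]
  simp only [Nat.cast_ite, Nat.cast_one, Nat.cast_zero]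

lemma coeff_one_orderPolynomial :
    (orderPolynomial K r s).coeff 1 =
      ∑ k ∈ Icc 1 #s, (-1 : K) ^ (k + 1) / k * surjCount r s k := by
  rw [orderPolynomial, finsetSum_coeff, sum_range_eq_add_Ico _ (#s).succ_pos,
    Nat.succ_eq_add_one, Ico_add_one_right_eq_Icc, descPochhammer_zero, mul_one, coeff_C_succ,
    zero_add]
  refine sum_congr rfl fun k hk => ?_
  obtain ⟨k, rfl⟩ := Nat.exists_eq_add_of_le' (mem_Icc.1 hk).1
  have := Nat.cast_ne_zero (R := K).2 k.factorial_ne_zero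
  have : (k : K) + 1 ≠ 0 := Nat.cast_add_one_ne_zero k
  rw [coeff_C_mul, coeff_one_descPochhammer_succ, Nat.factorial_succ]
  push_cast
  field_simp
  ring

lemma orderPolynomial_empty : orderPolynomial K r ∅ = 1 :=
  polynomial_eq_of_eval_natCast fun x => by
    rw [eval_natCast_orderPolynomial, strictMaps_empty, card_singleton, Nat.cast_one, eval_one]

lemma coeff_zero_orderPolynomial (hs : s.Nonempty) : (orderPolynomial K r s).coeff 0 = 0 := by
  rw [coeff_zero_eq_eval_zero, ← Nat.cast_zero, eval_natCast_orderPolynomial, strictMaps_zero hs,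
    card_empty]

variable [DecidableEq α]

lemma orderPolynomial_union (hst : Disjoint s t) (h : ∀ a ∈ s, ∀ b ∈ t, ¬ r a b ∧ ¬ r b a) :
    orderPolynomial K r (s ∪ t) = orderPolynomial K r s * orderPolynomial K r t :=
  polynomial_eq_of_eval_natCast fun x => by
    simp only [eval_mul, eval_natCast_orderPolynomial, card_strictMaps_union hst h, Nat.cast_mul]

lemma coeff_one_orderPolynomial_union (hs : s.Nonempty) (ht : t.Nonempty) (hst : Disjoint s t)
    (h : ∀ a ∈ s, ∀ b ∈ t, ¬ r a b ∧ ¬ r b a) : (orderPolynomial K r (s ∪ t)).coeff 1 = 0 := by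
  rw [orderPolynomial_union hst h, mul_coeff_one, coeff_zero_orderPolynomial hs,
    coeff_zero_orderPolynomial ht, zero_mul, mul_zero, add_zero]

lemma taylor_orderPolynomial (x : ℕ) :
    taylor (x : K) (orderPolynomial K r s) = ∑ D ∈ lowerSubsets r s,
      C ((orderPolynomial K r (s \ D)).eval (x : K)) * orderPolynomial K r D :=
  polynomial_eq_of_eval_natCast fun y => by
    simp only [taylor_eval, ← Nat.cast_add, eval_natCast_orderPolynomial, card_strictMaps_add,
      Nat.cast_sum, Nat.cast_mul, eval_finsetSum, eval_C_mul]
    exact sum_congr rfl fun D _ => mul_comm _ _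

lemma derivative_orderPolynomial :
    derivative (orderPolynomial K r s) = ∑ D ∈ lowerSubsets r s,
      C ((orderPolynomial K r D).coeff 1) * orderPolynomial K r (s \ D) :=
  polynomial_eq_of_eval_natCast fun x => by
    simp only [← taylor_coeff_one, taylor_orderPolynomial, finsetSum_coeff, coeff_C_mul,
      eval_finsetSum, eval_C_mul]
    exact sum_congr rfl fun D _ => mul_comm _ _

end OrderPolynomial

section ForestPolynomial

variable {α : Type*} (r : α → α → Prop)

/-- The relation `r` restricts to a partial order on `s` whose Hasse diagram is a forest; `r a b`
means that `a` is an ancestor of `b`. -/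
structure IsForestOn (s : Finset α) : Prop where
  refl : ∀ a ∈ s, r a a
  trans : ∀ a ∈ s, ∀ b ∈ s, ∀ c ∈ s, r a b → r b c → r a c
  antisymm : ∀ a ∈ s, ∀ b ∈ s, r a b → r b a → a = b
  total : ∀ a ∈ s, ∀ b ∈ s, ∀ c ∈ s, r a c → r b c → r a b ∨ r b a

open Classical in
/-- The number of vertices of the subtree of `s` rooted at `a`. -/
noncomputable def subtreeCard (s : Finset α) (a : α) : ℕ :=
  #{b ∈ s | r a b}

/-- The tree factorial of `s`, extended multiplicatively to forests. -/
noncomputable def treeFactorial (s : Finset α) : ℕ :=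
  ∏ a ∈ s, subtreeCard r s a

open Classical in
/-- The roots of the forest `s`. -/
noncomputable def forestRoots (s : Finset α) : Finset α :=
  {a ∈ s | ∀ b ∈ s, r b a → b = a}

variable {r} {s : Finset α} {a b : α}

lemma mem_forestRoots : a ∈ forestRoots r s ↔ a ∈ s ∧ ∀ b ∈ s, r b a → b = a := by
  simp [forestRoots]

lemma singleton_mem_lowerSubsets : {a} ∈ lowerSubsets r s ↔ a ∈ forestRoots r s := by
  simp [mem_lowerSubsets, mem_forestRoots]

namespace IsForestOn

lemma subtreeCard_pos (hs : IsForestOn r s) (ha : a ∈ s) : 0 < subtreeCard r s a :=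
  card_pos.2 ⟨a, by simpa [ha] using hs.refl a ha⟩

lemma subtreeCard_lt (hs : IsForestOn r s) (ha : a ∈ s) (hb : b ∈ s) (hab : r a b) (hne : a ≠ b) :
    subtreeCard r s b < subtreeCard r s a := by
  classical
  refine card_lt_card (ssubset_iff_of_subset ?_ |>.2 ⟨a, ?_⟩)
  · exact monotone_filter_right s fun c hc hbc => hs.trans a ha b hb c hc hab hbc
  · simp only [mem_filter, ha, hs.refl a ha, true_and, and_self]
    exact fun hba => hne (hs.antisymm a ha b hb hab hba)

lemma exists_root (hs : IsForestOn r s) (hb : b ∈ s) : ∃ a ∈ forestRoots r s, r a b := by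
  classical
  obtain ⟨a, ha, hmax⟩ := {a ∈ s | r a b}.exists_max_image (subtreeCard r s)
    ⟨b, mem_filter.2 ⟨hb, hs.refl b hb⟩⟩
  obtain ⟨has, hab⟩ := mem_filter.1 ha
  refine ⟨a, mem_forestRoots.2 ⟨has, fun c hc hca => ?_⟩, hab⟩
  by_contra hne
  exact (hs.subtreeCard_lt hc has hca hne).not_ge
    (hmax c (mem_filter.2 ⟨hc, hs.trans c hc a has b hb hca hab⟩))

lemma sum_subtreeCard_forestRoots (hs : IsForestOn r s) :
    ∑ a ∈ forestRoots r s, subtreeCard r s a = #s := by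
  classical
  refine (sum_card_bipartiteAbove_eq_sum_card_bipartiteBelow r).trans ?_
  rw [card_eq_sum_ones]
  refine sum_congr rfl fun b hb => ?_
  obtain ⟨a, ha, hab⟩ := hs.exists_root hb
  refine card_eq_one.2 ⟨a, eq_singleton_iff_unique_mem.2
    ⟨(mem_bipartiteBelow _).2 ⟨ha, hab⟩, fun c hc => ?_⟩⟩
  obtain ⟨hc, hcb⟩ := (mem_bipartiteBelow _).1 hc
  obtain ⟨has, hroot⟩ := mem_forestRoots.1 ha
  obtain ⟨hcs, hroot'⟩ := mem_forestRoots.1 hc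
  rcases hs.total a has c hcs b hb hab hcb with hac | hca
  · exact (hroot' a has hac).symm
  · exact hroot c hcs hca

end IsForestOn

lemma treeFactorial_eq_mul_erase [DecidableEq α] (ha : a ∈ forestRoots r s) :
    treeFactorial r s = subtreeCard r s a * treeFactorial r (s.erase a) := by
  classical
  obtain ⟨has, hroot⟩ := mem_forestRoots.1 ha
  rw [treeFactorial, treeFactorial, ← mul_prod_erase _ _ has]
  congr 1
  refine prod_congr rfl fun b hb => ?_
  obtain ⟨hba, hbs⟩ := mem_erase.1 hb
  rw [subtreeCard, subtreeCard, filter_erase, erase_eq_of_notMem]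
  exact fun h => hba (hroot b hbs (mem_filter.1 h).2)

lemma treeFactorial_map {β : Type*} {q : β → β → Prop} (e : α ↪ β)
    (h : ∀ a ∈ s, ∀ b ∈ s, q (e a) (e b) ↔ r a b) :
    treeFactorial q (s.map e) = treeFactorial r s := by
  classical
  rw [treeFactorial, prod_map]
  refine prod_congr rfl fun a ha => ?_
  rw [subtreeCard, filter_map, card_map]
  exact congrArg card (filter_congr fun b hb => h a ha b hb)

variable (K : Type*) [Field K]

/-- The polynomial `X ^ |s| / t(s)!` of the forest `s`. -/
noncomputable def forestPolynomial (r : α → α → Prop) (s : Finset α) : K[X] :=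
  C (treeFactorial r s : K)⁻¹ * X ^ #s

variable {K}

lemma forestPolynomial_empty : forestPolynomial K r ∅ = 1 := by
  simp [forestPolynomial, treeFactorial]

lemma coeff_zero_forestPolynomial (hs : s.Nonempty) : (forestPolynomial K r s).coeff 0 = 0 := by
  rw [forestPolynomial, coeff_C_mul, coeff_X_pow, if_neg hs.card_pos.ne, mul_zero]

lemma coeff_one_forestPolynomial_singleton (ha : r a a) :
    (forestPolynomial K r {a}).coeff 1 = 1 := by
  simp [forestPolynomial, treeFactorial, subtreeCard, filter_singleton, ha]

lemma coeff_one_forestPolynomial_eq_zero (hs : #s ≠ 1) : (forestPolynomial K r s).coeff 1 = 0 := by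
  rw [forestPolynomial, coeff_C_mul, coeff_X_pow, if_neg hs.symm, mul_zero]

lemma eval_one_forestPolynomial : (forestPolynomial K r s).eval 1 = (treeFactorial r s : K)⁻¹ := by
  simp [forestPolynomial]

variable [CharZero K]

lemma forestPolynomial_erase [DecidableEq α] (hs : IsForestOn r s) (ha : a ∈ forestRoots r s) :
    forestPolynomial K r (s.erase a) =
      C (subtreeCard r s a : K) * (C (treeFactorial r s : K)⁻¹ * X ^ (#s - 1)) := by
  have has := (mem_forestRoots.1 ha).1
  have h0 : (subtreeCard r s a : K) ≠ 0 := Nat.cast_ne_zero.2 (hs.subtreeCard_pos has).ne'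
  rw [forestPolynomial, card_erase_of_mem has, treeFactorial_eq_mul_erase ha, Nat.cast_mul,
    mul_inv, ← mul_assoc, ← C_mul, mul_inv_cancel_left₀ h0]

lemma derivative_forestPolynomial [DecidableEq α] (hs : IsForestOn r s) :
    derivative (forestPolynomial K r s) = ∑ D ∈ lowerSubsets r s,
      C ((forestPolynomial K r D).coeff 1) * forestPolynomial K r (s \ D) := by
  calc derivative (forestPolynomial K r s)
      = ∑ a ∈ forestRoots r s, forestPolynomial K r (s.erase a) := by
        rw [sum_congr rfl fun a ha => forestPolynomial_erase hs ha, ← sum_mul, ← map_sum,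
          ← Nat.cast_sum, hs.sum_subtreeCard_forestRoots, forestPolynomial, derivative_C_mul,
          derivative_X_pow]
        ring
    _ = ∑ D ∈ (forestRoots r s).map ⟨singleton, singleton_injective⟩,
          C ((forestPolynomial K r D).coeff 1) * forestPolynomial K r (s \ D) := by
        rw [sum_map]
        refine sum_congr rfl fun a ha => ?_
        rw [Function.Embedding.coeFn_mk,
          coeff_one_forestPolynomial_singleton (hs.refl a (mem_forestRoots.1 ha).1), C_1, one_mul,
          sdiff_singleton_eq_erase]
    _ = _ := by
        refine sum_subset (fun D hD => ?_) fun D hD hD' => ?_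
        · obtain ⟨a, ha, rfl⟩ := mem_map.1 hD
          exact singleton_mem_lowerSubsets.2 ha
        · rw [coeff_one_forestPolynomial_eq_zero, C_0, zero_mul]
          rintro h1
          obtain ⟨a, rfl⟩ := card_eq_one.1 h1
          exact hD' (mem_map_of_mem _ (singleton_mem_lowerSubsets.1 hD))

end ForestPolynomial

section ConvolutionSemigroup

variable {α R : Type*} [DecidableEq α] [LT α] [CommRing R]

/-- No element of `S` lies strictly between two elements of `U`. -/
def Unsplit (S U : Finset α) : Prop :=
  ∀ x ∈ U, ∀ y ∈ U, ∀ s ∈ S, x < s → ¬ s < y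

/-- One-parameter convolution semigroups of characters, evaluated on words whose letters are
indexed by `U` and which are interleaved with the letters indexed by `S`; the parameter is the
polynomial variable. The generator is the coefficient of `X`: it vanishes on words that are
interrupted by a letter of `S`, and the derivative is obtained by extracting one subword. -/
structure IsConvolutionSemigroup (F : Finset α → Finset α → R[X]) : Prop where
  empty : ∀ S, F ∅ S = 1
  coeff_zero : ∀ U S, U.Nonempty → (F U S).coeff 0 = 0
  derivative_eq : ∀ U S, derivative (F U S) =
    ∑ T ∈ U.powerset, C ((F T S).coeff 1) * F (U \ T) (S ∪ T)
  coeff_one_of_unsplit : ∀ U S, Unsplit S U → (F U S).coeff 1 = (F U ∅).coeff 1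
  coeff_one_of_not_unsplit : ∀ U S, Disjoint U S → ¬ Unsplit S U → (F U S).coeff 1 = 0

namespace IsConvolutionSemigroup

variable {F G : Finset α → Finset α → R[X]} {U S : Finset α}

lemma derivative_eq_add (hF : IsConvolutionSemigroup F) (hG : IsConvolutionSemigroup G)
    (hUS : Disjoint U S) (hsub : ∀ T ⊂ U, ∀ S, Disjoint T S → F T S = G T S) :
    derivative (F U S) = derivative (G U S) + C ((F U S).coeff 1 - (G U S).coeff 1) := by
  rw [← sub_eq_iff_eq_add', hF.derivative_eq, hG.derivative_eq, ← sum_sub_distrib,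
    sum_eq_single_of_mem U (mem_powerset_self U)]
  · simp [hF.empty, hG.empty]
  · intro T hT hTU
    have hTU : T ⊂ U := (mem_powerset.1 hT).ssubset_of_ne hTU
    rcases T.eq_empty_or_nonempty with rfl | hT
    · simp [hF.empty, hG.empty, coeff_one]
    · have hdisj : Disjoint (U \ T) (S ∪ T) :=
        disjoint_union_right.2 ⟨hUS.mono_left sdiff_subset, sdiff_disjoint⟩
      rw [hsub T hTU S (hUS.mono_left hTU.1), hsub _ (sdiff_ssubset hTU.1 hT) _ hdisj, sub_self]

variable [IsAddTorsionFree R]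

theorem eq_of_eval_one_eq (hF : IsConvolutionSemigroup F) (hG : IsConvolutionSemigroup G)
    (h1 : ∀ U, U.Nonempty → (F U ∅).eval 1 = (G U ∅).eval 1) (hUS : Disjoint U S) :
    F U S = G U S := by
  induction U using Finset.strongInduction generalizing S with
  | H U ih =>
  rcases U.eq_empty_or_nonempty with rfl | hU
  · rw [hF.empty, hG.empty]
  have hderiv := fun S hUS => hF.derivative_eq_add hG (S := S) hUS fun T hT S => ih T hT
  have h0 : ∀ S, (F U S).coeff 0 = (G U S).coeff 0 := fun S => by
    rw [hF.coeff_zero U S hU, hG.coeff_zero U S hU]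
  have hgen₀ : (F U ∅).coeff 1 = (G U ∅).coeff 1 := sub_eq_zero.1 <|
    eq_zero_of_derivative_eq_add_C (hderiv ∅ (disjoint_empty_right U)) (h0 ∅) (h1 U hU)
  have hgen : (F U S).coeff 1 = (G U S).coeff 1 := by
    by_cases h : Unsplit S U
    · rw [hF.coeff_one_of_unsplit U S h, hG.coeff_one_of_unsplit U S h, hgen₀]
    · rw [hF.coeff_one_of_not_unsplit U S hUS h, hG.coeff_one_of_not_unsplit U S hUS h]
  refine polynomial_eq_of_derivative_eq ?_ (h0 S)
  rw [hderiv S hUS, hgen, sub_self, C_0, add_zero]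

end IsConvolutionSemigroup

end ConvolutionSemigroup

section NoncrossingFamilies

variable {n : ℕ} {U S T V B : Finset (Fin n)} {P Q D : Finset (Finset (Fin n))}

/-- The converse of `NestedIn`: the ancestor relation in the forest of nestings. -/
abbrev Encloses (V W : Finset (Fin n)) : Prop := NestedIn W V

/-- `P` is the set of blocks of a noncrossing partition of `U`, none of whose blocks is split by
an element of `S`. -/
structure IsNCFamily (U S : Finset (Fin n)) (P : Finset (Finset (Fin n))) : Prop where
  nonempty : ∀ V ∈ P, V.Nonempty
  subset : ∀ V ∈ P, V ⊆ U
  exists_mem : ∀ x ∈ U, ∃ V ∈ P, x ∈ V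
  eq_of_mem : ∀ V ∈ P, ∀ W ∈ P, ∀ x ∈ V, x ∈ W → V = W
  noncrossing : ∀ V ∈ P, ∀ W ∈ P, ∀ a ∈ V, ∀ b ∈ W, ∀ c ∈ V, ∀ d ∈ W,
    a < b → b < c → c < d → V = W
  unsplit : ∀ V ∈ P, Unsplit S V

open Classical in
/-- The noncrossing partitions of `U` none of whose blocks is split by an element of `S`. -/
noncomputable def ncFamilies (U S : Finset (Fin n)) : Finset (Finset (Finset (Fin n))) :=
  univ.filter (IsNCFamily U S)

lemma mem_ncFamilies : P ∈ ncFamilies U S ↔ IsNCFamily U S P := by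
  simp [ncFamilies]

lemma nestedIn_refl (V : Finset (Fin n)) : NestedIn V V :=
  fun w hw => ⟨⟨w, hw, le_rfl⟩, ⟨w, hw, le_rfl⟩⟩

lemma NestedIn.trans (hTV : NestedIn T V) (hVB : NestedIn V B) : NestedIn T B := by
  intro t ht
  obtain ⟨⟨x, hx, hxt⟩, ⟨y, hy, hty⟩⟩ := hTV t ht
  obtain ⟨⟨x', hx', hxx'⟩, -⟩ := hVB x hx
  obtain ⟨-, ⟨y', hy', hyy'⟩⟩ := hVB y hy
  exact ⟨⟨x', hx', hxx'.trans hxt⟩, ⟨y', hy', hty.trans hyy'⟩⟩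

lemma ncFamilies_empty (S : Finset (Fin n)) : ncFamilies ∅ S = {∅} := by
  ext P
  rw [mem_ncFamilies, mem_singleton]
  constructor
  · intro hP
    refine eq_empty_of_forall_notMem fun V hV => (hP.nonempty V hV).ne_empty ?_
    exact subset_empty.1 (hP.subset V hV)
  · rintro rfl
    constructor <;> simp

lemma ncFamilies_eq_of_unsplit (h : Unsplit S U) : ncFamilies U S = ncFamilies U ∅ := by
  ext P
  simp only [mem_ncFamilies]
  constructor
  · exact fun hP => { hP with unsplit := by simp [Unsplit] }
  · exact fun hP => { hP with
      unsplit := fun V hV x hx y hy => h x (hP.subset V hV hx) y (hP.subset V hV hy) }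

namespace IsNCFamily

lemma biUnion_eq (hP : IsNCFamily U S P) : P.biUnion id = U :=
  (biUnion_subset.2 hP.subset).antisymm fun x hx => mem_biUnion.2 (hP.exists_mem x hx)

lemma nonempty_of_nonempty (hP : IsNCFamily U S P) (hU : U.Nonempty) : P.Nonempty := by
  obtain ⟨x, hx⟩ := hU
  obtain ⟨V, hV, -⟩ := hP.exists_mem x hx
  exact ⟨V, hV⟩

lemma nestedIn_of_between (hP : IsNCFamily U S P) (hV : V ∈ P) (hB : B ∈ P) {x y v : Fin n}
    (hx : x ∈ B) (hy : y ∈ B) (hv : v ∈ V) (hxv : x < v) (hvy : v < y) : NestedIn V B := by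
  by_cases hVB : V = B
  · exact hVB ▸ nestedIn_refl V
  intro w hw
  refine ⟨⟨x, hx, ?_⟩, ⟨y, hy, ?_⟩⟩
  · exact not_lt.1 fun hwx => hVB (hP.noncrossing V hV B hB w hw x hx v hv y hy hwx hxv hvy)
  · exact not_lt.1 fun hyw =>
      hVB (hP.noncrossing B hB V hV x hx v hv y hy w hw hxv hvy hyw).symm

lemma nestedIn_antisymm (hP : IsNCFamily U S P) (hV : V ∈ P) (hB : B ∈ P) (hVB : NestedIn V B)
    (hBV : NestedIn B V) : V = B := by
  have hVn := hP.nonempty V hV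
  have hBn := hP.nonempty B hB
  obtain ⟨⟨x, hx, hxv⟩, -⟩ := hVB _ (V.min'_mem hVn)
  obtain ⟨⟨y, hy, hyb⟩, -⟩ := hBV _ (B.min'_mem hBn)
  have hmin : V.min' hVn = B.min' hBn :=
    le_antisymm ((V.min'_le y hy).trans hyb) ((B.min'_le x hx).trans hxv)
  exact hP.eq_of_mem V hV B hB _ (V.min'_mem hVn) (hmin ▸ B.min'_mem hBn)

lemma nestedIn_total (hP : IsNCFamily U S P) (hV : V ∈ P) (hB : B ∈ P) (hT : T.Nonempty)
    (hTV : NestedIn T V) (hTB : NestedIn T B) : NestedIn V B ∨ NestedIn B V := by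
  by_cases hVB : V = B
  · exact Or.inl (hVB ▸ nestedIn_refl V)
  have hne : ∀ x ∈ V, ∀ y ∈ B, x ≠ y := by
    rintro x hx y hy rfl
    exact hVB (hP.eq_of_mem V hV B hB x hx hy)
  obtain ⟨t, ht⟩ := hT
  obtain ⟨⟨x, hx, hxt⟩, ⟨y, hy, hty⟩⟩ := hTV t ht
  obtain ⟨⟨x', hx', hxt'⟩, ⟨y', hy', hty'⟩⟩ := hTB t ht
  have hx'y : x' < y := (hxt'.trans hty).lt_of_ne (hne y hy x' hx').symm
  have hxy' : x < y' := (hxt.trans hty').lt_of_ne (hne x hx y' hy')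
  rcases (hne x hx x' hx').lt_or_gt with hlt | hlt
  · exact Or.inr (hP.nestedIn_of_between hB hV hx hy hx' hlt hx'y)
  · exact Or.inl (hP.nestedIn_of_between hV hB hx' hy' hx hlt hxy')

lemma isForestOn (hP : IsNCFamily U S P) : IsForestOn Encloses P where
  refl V _ := nestedIn_refl V
  trans _ _ _ _ _ _ hUV hVW := hVW.trans hUV
  antisymm _ hV _ hB hVB hBV := hP.nestedIn_antisymm hV hB hBV hVB
  total _ hV _ hB T hT hVT hBT := (hP.nestedIn_total hV hB (hP.nonempty T hT) hVT hBT).symm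

lemma outer (hP : IsNCFamily U S P) (hD : D ⊆ P) : IsNCFamily (D.biUnion id) S D where
  nonempty V hV := hP.nonempty V (hD hV)
  subset _ hV := subset_biUnion_of_mem id hV
  exists_mem _ hx := mem_biUnion.1 hx
  eq_of_mem V hV W hW := hP.eq_of_mem V (hD hV) W (hD hW)
  noncrossing V hV W hW := hP.noncrossing V (hD hV) W (hD hW)
  unsplit V hV := hP.unsplit V (hD hV)

lemma inner (hP : IsNCFamily U S P) (hD : D ∈ lowerSubsets Encloses P) :
    IsNCFamily (U \ D.biUnion id) (S ∪ D.biUnion id) (P \ D) := by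
  obtain ⟨hDP, hD⟩ := mem_lowerSubsets.1 hD
  refine ⟨fun V hV => hP.nonempty V (mem_sdiff.1 hV).1, fun V hV x hx => ?_, fun x hx => ?_,
    fun V hV W hW => hP.eq_of_mem V (mem_sdiff.1 hV).1 W (mem_sdiff.1 hW).1,
    fun V hV W hW => hP.noncrossing V (mem_sdiff.1 hV).1 W (mem_sdiff.1 hW).1,
    fun V hV x hx y hy s hs hxs hsy => ?_⟩
  · obtain ⟨hV, hVD⟩ := mem_sdiff.1 hV
    refine mem_sdiff.2 ⟨hP.subset V hV hx, fun hxD => ?_⟩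
    obtain ⟨W, hW, hxW⟩ := mem_biUnion.1 hxD
    exact hVD (hP.eq_of_mem V hV W (hDP hW) x hx hxW ▸ hW)
  · obtain ⟨hxU, hxD⟩ := mem_sdiff.1 hx
    obtain ⟨V, hV, hxV⟩ := hP.exists_mem x hxU
    exact ⟨V, mem_sdiff.2 ⟨hV, fun hVD => hxD (mem_biUnion.2 ⟨V, hVD, hxV⟩)⟩, hxV⟩
  · obtain ⟨hV, hVD⟩ := mem_sdiff.1 hV
    rcases mem_union.1 hs with hs | hs
    · exact hP.unsplit V hV x hx y hy s hs hxs hsy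
    · obtain ⟨W, hW, hsW⟩ := mem_biUnion.1 hs
      exact hVD (hD W hW V hV (hP.nestedIn_of_between (hDP hW) hV hx hy hsW hxs hsy))

lemma disjoint_of_sdiff (hP : IsNCFamily T S P) (hQ : IsNCFamily (U \ T) (S ∪ T) Q) :
    Disjoint P Q := by
  refine disjoint_left.2 fun V hVP hVQ => ?_
  obtain ⟨x, hx⟩ := hP.nonempty V hVP
  exact (mem_sdiff.1 (hQ.subset V hVQ hx)).2 (hP.subset V hVP hx)

lemma union (hT : T ⊆ U) (hP : IsNCFamily T S P) (hQ : IsNCFamily (U \ T) (S ∪ T) Q) :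
    IsNCFamily U S (P ∪ Q) where
  nonempty V hV := (mem_union.1 hV).elim (hP.nonempty V) (hQ.nonempty V)
  subset V hV := (mem_union.1 hV).elim (fun hV => (hP.subset V hV).trans hT)
    fun hV => (hQ.subset V hV).trans sdiff_subset
  exists_mem x hx := by
    by_cases hxT : x ∈ T
    · obtain ⟨V, hV, hxV⟩ := hP.exists_mem x hxT
      exact ⟨V, mem_union_left _ hV, hxV⟩
    · obtain ⟨V, hV, hxV⟩ := hQ.exists_mem x (mem_sdiff.2 ⟨hx, hxT⟩)
      exact ⟨V, mem_union_right _ hV, hxV⟩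
  eq_of_mem V hV W hW x hxV hxW := by
    rcases mem_union.1 hV with hV | hV <;> rcases mem_union.1 hW with hW | hW
    · exact hP.eq_of_mem V hV W hW x hxV hxW
    · exact absurd (hP.subset V hV hxV) (mem_sdiff.1 (hQ.subset W hW hxW)).2
    · exact absurd (hP.subset W hW hxW) (mem_sdiff.1 (hQ.subset V hV hxV)).2
    · exact hQ.eq_of_mem V hV W hW x hxV hxW
  noncrossing V hV W hW a ha b hb c hc d hd hab hbc hcd := by
    rcases mem_union.1 hV with hV | hV <;> rcases mem_union.1 hW with hW | hW
    · exact hP.noncrossing V hV W hW a ha b hb c hc d hd hab hbc hcd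
    · exact absurd hcd (hQ.unsplit W hW b hb d hd c (mem_union_right _ (hP.subset V hV hc)) hbc)
    · exact absurd hbc (hQ.unsplit V hV a ha c hc b (mem_union_right _ (hP.subset W hW hb)) hab)
    · exact hQ.noncrossing V hV W hW a ha b hb c hc d hd hab hbc hcd
  unsplit V hV x hx y hy s hs := (mem_union.1 hV).elim
    (fun hV => hP.unsplit V hV x hx y hy s hs)
    fun hV => hQ.unsplit V hV x hx y hy s (mem_union_left _ hs)

lemma mem_lowerSubsets_union (hP : IsNCFamily T S P) (hQ : IsNCFamily (U \ T) (S ∪ T) Q) :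
    P ∈ lowerSubsets Encloses (P ∪ Q) := by
  refine mem_lowerSubsets.2 ⟨subset_union_left, fun V hV W hW hVW => ?_⟩
  refine (mem_union.1 hW).resolve_right fun hW => ?_
  obtain ⟨v, hv⟩ := hP.nonempty V hV
  have hvT := hP.subset V hV hv
  have hne : ∀ z ∈ W, z ≠ v := by
    rintro z hz rfl
    exact (mem_sdiff.1 (hQ.subset W hW hz)).2 hvT
  obtain ⟨⟨x, hx, hxv⟩, ⟨y, hy, hvy⟩⟩ := hVW v hv
  exact hQ.unsplit W hW x hx y hy v (mem_union_right _ hvT) (hxv.lt_of_ne (hne x hx))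
    (hvy.lt_of_ne (hne y hy).symm)

end IsNCFamily

/-- Cutting a noncrossing partition below a set of outer blocks: the inner blocks are precisely
the noncrossing partitions of the remaining letters that are not split by the removed ones. -/
lemma sum_lowerSubsets_ncFamilies {M : Type*} [AddCommMonoid M] (U S : Finset (Fin n))
    (f : Finset (Finset (Fin n)) → Finset (Finset (Fin n)) → M) :
    ∑ P ∈ ncFamilies U S, ∑ D ∈ lowerSubsets Encloses P, f D (P \ D) =
      ∑ T ∈ U.powerset, ∑ P ∈ ncFamilies T S, ∑ Q ∈ ncFamilies (U \ T) (S ∪ T), f P Q := by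
  simp_rw [← sum_product']
  rw [sum_sigma', sum_sigma']
  refine sum_bij' (fun x _ => ⟨x.2.biUnion id, (x.2, x.1 \ x.2)⟩)
    (fun y _ => ⟨y.2.1 ∪ y.2.2, y.2.1⟩) ?_ ?_ ?_ ?_ fun _ _ => rfl
  · rintro ⟨P, D⟩ h
    simp only [mem_sigma, mem_ncFamilies, mem_product, mem_powerset] at h ⊢
    obtain ⟨hP, hD⟩ := h
    have hDP := (mem_lowerSubsets.1 hD).1
    exact ⟨biUnion_subset.2 fun V hV => hP.subset V (hDP hV), hP.outer hDP, hP.inner hD⟩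
  · rintro ⟨T, P, Q⟩ h
    simp only [mem_sigma, mem_ncFamilies, mem_product, mem_powerset] at h ⊢
    obtain ⟨hT, hP, hQ⟩ := h
    exact ⟨hP.union hT hQ, hP.mem_lowerSubsets_union hQ⟩
  · rintro ⟨P, D⟩ h
    simp only [mem_sigma, mem_lowerSubsets] at h
    simp [union_sdiff_of_subset h.2.1]
  · rintro ⟨T, P, Q⟩ h
    simp only [mem_sigma, mem_ncFamilies, mem_product] at h
    obtain ⟨-, hP, hQ⟩ := h
    simp [hP.biUnion_eq, union_sdiff_cancel_left (hP.disjoint_of_sdiff hQ)]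

end NoncrossingFamilies

section ForestWeight

/-- Polynomial weights of forests that behave like the Butcher series of a one-parameter group: the
derivative cuts off a lower set weighted by the coefficient of `X`, and this coefficient vanishes
on forests that are not trees. -/
structure IsForestWeight {α R : Type*} [DecidableEq α] [CommRing R] (r : α → α → Prop)
    (W : Finset α → R[X]) : Prop where
  empty : W ∅ = 1
  coeff_zero : ∀ s, s.Nonempty → (W s).coeff 0 = 0
  derivative_eq : ∀ s, IsForestOn r s →
    derivative (W s) = ∑ D ∈ lowerSubsets r s, C ((W D).coeff 1) * W (s \ D)
  coeff_one_union : ∀ s t, s.Nonempty → t.Nonempty → Disjoint s t →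
    (∀ a ∈ s, ∀ b ∈ t, ¬ r a b ∧ ¬ r b a) → (W (s ∪ t)).coeff 1 = 0

variable (K : Type*) [Field K] [CharZero K] {α : Type*} [DecidableEq α] (r : α → α → Prop)

lemma isForestWeight_orderPolynomial : IsForestWeight r (orderPolynomial K r) where
  empty := orderPolynomial_empty
  coeff_zero _ := coeff_zero_orderPolynomial
  derivative_eq _ _ := derivative_orderPolynomial
  coeff_one_union _ _ := coeff_one_orderPolynomial_union

lemma isForestWeight_forestPolynomial : IsForestWeight r (forestPolynomial K r) where
  empty := forestPolynomial_empty
  coeff_zero _ := coeff_zero_forestPolynomial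
  derivative_eq _ := derivative_forestPolynomial
  coeff_one_union s t hs ht hst _ := coeff_one_forestPolynomial_eq_zero <| by
    rw [card_union_of_disjoint hst]
    have := hs.card_pos
    have := ht.card_pos
    omega

variable {n : ℕ} {R : Type*} [CommRing R] {U S : Finset (Fin n)} {P : Finset (Finset (Fin n))}

/-- The sum of `f_P W(P)` over the noncrossing partitions `P` of `U` not split by `S`. -/
noncomputable def ncSum (W : Finset (Finset (Fin n)) → R[X]) (f : Finset (Fin n) → R)
    (U S : Finset (Fin n)) : R[X] :=
  ∑ P ∈ ncFamilies U S, C (∏ V ∈ P, f V) * W P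

namespace IsForestWeight

variable {W : Finset (Finset (Fin n)) → R[X]}

lemma coeff_one_of_cut (hW : IsForestWeight Encloses W) (hP : IsNCFamily U S P) {s : Fin n}
    (hs : ∀ V ∈ P, (∀ x ∈ V, x ≤ s) ∨ ∀ x ∈ V, s < x) (hle : ∃ x ∈ U, x ≤ s)
    (hlt : ∃ x ∈ U, s < x) : (W P).coeff 1 = 0 := by
  classical
  rw [← filter_union_filter_not_eq (fun V => ∀ x ∈ V, x ≤ s) P]
  refine hW.coeff_one_union _ _ ?_ ?_ (disjoint_filter_filter_not _ _ _) fun V hV B hB => ?_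
  · obtain ⟨x, hx, hxs⟩ := hle
    obtain ⟨V, hV, hxV⟩ := hP.exists_mem x hx
    exact ⟨V, mem_filter.2 ⟨hV, (hs V hV).resolve_right fun h => (h x hxV).not_ge hxs⟩⟩
  · obtain ⟨x, hx, hsx⟩ := hlt
    obtain ⟨V, hV, hxV⟩ := hP.exists_mem x hx
    exact ⟨V, mem_filter.2 ⟨hV, fun h => (h x hxV).not_gt hsx⟩⟩
  · obtain ⟨hV, hVs⟩ := mem_filter.1 hV
    obtain ⟨hB, hBs⟩ := mem_filter.1 hB
    have hsB := (hs B hB).resolve_left hBs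
    obtain ⟨v, hv⟩ := hP.nonempty V hV
    obtain ⟨b, hb⟩ := hP.nonempty B hB
    refine ⟨fun hBV => ?_, fun hVB => ?_⟩
    · obtain ⟨-, ⟨y, hy, hby⟩⟩ := hBV b hb
      exact ((hsB b hb).trans_le hby).not_ge (hVs y hy)
    · obtain ⟨⟨y, hy, hyv⟩, -⟩ := hVB v hv
      exact ((hsB y hy).trans_le hyv).not_ge (hVs v hv)

variable {f : Finset (Fin n) → R}

lemma coeff_zero_ncSum (hW : IsForestWeight Encloses W) (hU : U.Nonempty) :
    (ncSum W f U S).coeff 0 = 0 := by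
  rw [ncSum, finsetSum_coeff]
  refine sum_eq_zero fun P hP => ?_
  rw [coeff_C_mul, hW.coeff_zero P ((mem_ncFamilies.1 hP).nonempty_of_nonempty hU), mul_zero]

lemma coeff_one_ncSum_of_not_unsplit (hW : IsForestWeight Encloses W) (hUS : Disjoint U S)
    (h : ¬ Unsplit S U) : (ncSum W f U S).coeff 1 = 0 := by
  simp only [Unsplit, not_forall, not_not] at h
  obtain ⟨x, hx, y, hy, s, hs, hxs, hsy⟩ := h
  rw [ncSum, finsetSum_coeff]
  refine sum_eq_zero fun P hP => ?_
  rw [mem_ncFamilies] at hP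
  rw [coeff_C_mul, hW.coeff_one_of_cut hP ?_ ⟨x, hx, hxs.le⟩ ⟨y, hy, hsy⟩, mul_zero]
  intro V hV
  by_contra! ⟨⟨u, hu, hsu⟩, ⟨v, hv, hvs⟩⟩
  have hne : v ≠ s := fun h => disjoint_left.1 hUS (hP.subset V hV hv) (h ▸ hs)
  exact hP.unsplit V hV v hv u hu s hs (hvs.lt_of_ne hne) hsu

lemma derivative_ncSum (hW : IsForestWeight Encloses W) :
    derivative (ncSum W f U S) =
      ∑ T ∈ U.powerset, C ((ncSum W f T S).coeff 1) * ncSum W f (U \ T) (S ∪ T) := by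
  calc derivative (ncSum W f U S)
      = ∑ P ∈ ncFamilies U S, ∑ D ∈ lowerSubsets Encloses P,
          C ((∏ V ∈ D, f V) * (W D).coeff 1) * (C (∏ V ∈ P \ D, f V) * W (P \ D)) := by
        rw [ncSum, derivative_sum]
        refine sum_congr rfl fun P hP => ?_
        rw [derivative_C_mul, hW.derivative_eq P (mem_ncFamilies.1 hP).isForestOn, mul_sum]
        refine sum_congr rfl fun D hD => ?_
        rw [← prod_sdiff (mem_lowerSubsets.1 hD).1, C_mul, C_mul]
        ring
    _ = ∑ T ∈ U.powerset, ∑ P ∈ ncFamilies T S, ∑ Q ∈ ncFamilies (U \ T) (S ∪ T),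
          C ((∏ V ∈ P, f V) * (W P).coeff 1) * (C (∏ V ∈ Q, f V) * W Q) :=
        sum_lowerSubsets_ncFamilies U S fun P Q =>
          C ((∏ V ∈ P, f V) * (W P).coeff 1) * (C (∏ V ∈ Q, f V) * W Q)
    _ = _ := by
        refine sum_congr rfl fun T _ => ?_
        simp only [ncSum, finsetSum_coeff, coeff_C_mul, map_sum, sum_mul_sum]

theorem isConvolutionSemigroup_ncSum (hW : IsForestWeight Encloses W) (f : Finset (Fin n) → R) :
    IsConvolutionSemigroup (ncSum W f) where
  empty S := by simp [ncSum, ncFamilies_empty, hW.empty]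
  coeff_zero _ _ := hW.coeff_zero_ncSum
  derivative_eq _ _ := hW.derivative_ncSum
  coeff_one_of_unsplit U S h := by rw [ncSum, ncSum, ncFamilies_eq_of_unsplit h]
  coeff_one_of_not_unsplit _ _ := hW.coeff_one_ncSum_of_not_unsplit

end IsForestWeight

end ForestWeight

section Partitions

variable {m n : ℕ} {U S : Finset (Fin m)} {P : Finset (Finset (Fin m))}

lemma isNCFamily_parts {π : NPart n} (hπ : IsNoncrossing π) : IsNCFamily univ ∅ π.parts where
  nonempty _ := π.nonempty_of_mem_parts
  subset V _ := subset_univ V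
  exists_mem _ := π.exists_mem
  eq_of_mem _ hV _ hW _ := π.eq_of_mem_parts hV hW
  noncrossing V hV W hW a ha b hb c hc d hd hab hbc hcd :=
    hπ a b c d hab hbc hcd V hV W hW ha hc hb hd
  unsplit := by simp [Unsplit]

open Classical in
lemma sum_ncFamilies_univ {M : Type*} [AddCommMonoid M] (F : Finset (Finset (Fin n)) → M) :
    ∑ P ∈ ncFamilies univ ∅, F P = ∑ π : NPart n with IsNoncrossing π, F π.parts := by
  refine (sum_bij (fun π _ => π.parts) (fun π hπ => ?_) (fun _ _ _ _ => Finpartition.ext)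
    (fun P hP => ?_) fun _ _ => rfl).symm
  · exact mem_ncFamilies.2 (isNCFamily_parts (mem_filter.1 hπ).2)
  · have hP := mem_ncFamilies.1 hP
    let π : NPart n := Finpartition.ofExistsUnique P hP.subset
      (fun x hx => by
        obtain ⟨V, hV, hxV⟩ := hP.exists_mem x hx
        exact ⟨V, ⟨hV, hxV⟩, fun W hW => hP.eq_of_mem W hW.1 V hV x hW.2 hxV⟩)
      fun h => (hP.nonempty ∅ h).ne_empty rfl
    have hπ : IsNoncrossing π := fun a b c d hab hbc hcd V hV W hW ha hc hb hd =>
      hP.noncrossing V hV W hW a ha b hb c hc d hd hab hbc hcd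
    exact ⟨π, by simpa using hπ, rfl⟩

/-- The image of a family of blocks under an order embedding. -/
def mapBlocks (e : Fin m ↪o Fin n) (P : Finset (Finset (Fin m))) : Finset (Finset (Fin n)) :=
  P.map (mapEmbedding e.toEmbedding).toEmbedding

lemma encloses_map_iff (e : Fin m ↪o Fin n) {V B : Finset (Fin m)} :
    Encloses (V.map e.toEmbedding) (B.map e.toEmbedding) ↔ Encloses V B := by
  simp [NestedIn]

lemma isNCFamily_mapBlocks_iff (e : Fin m ↪o Fin n) :
    IsNCFamily (U.map e.toEmbedding) (S.map e.toEmbedding) (mapBlocks e P) ↔ IsNCFamily U S P := by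
  constructor <;> intro h
  · have heq : ∀ V ∈ P, ∀ W ∈ P, ∀ x ∈ V, ∀ y ∈ W, y = x → V = W := by
      simpa [mapBlocks] using h.eq_of_mem
    constructor
    · simpa [mapBlocks] using h.nonempty
    · simpa [mapBlocks] using h.subset
    · simpa [mapBlocks] using h.exists_mem
    · exact fun V hV W hW x hxV hxW => heq V hV W hW x hxV x hxW rfl
    · simpa [mapBlocks] using h.noncrossing
    · simpa [mapBlocks, Unsplit] using h.unsplit
  · constructor
    · simpa [mapBlocks] using h.nonempty
    · simpa [mapBlocks] using h.subset
    · simpa [mapBlocks] using h.exists_mem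
    · simpa [mapBlocks] using fun V hV W hW x hxV y hyW (hyx : y = x) =>
        h.eq_of_mem V hV W hW x hxV (hyx ▸ hyW)
    · simpa [mapBlocks] using h.noncrossing
    · simpa [mapBlocks, Unsplit] using h.unsplit

lemma exists_mapBlocks_eq (e : Fin m ↪o Fin n) {Q : Finset (Finset (Fin n))}
    (hQ : ∀ V ∈ Q, V ⊆ U.map e.toEmbedding) : ∃ P, mapBlocks e P = Q := by
  have hQ' : Q ⊆ U.powerset.map (mapEmbedding e.toEmbedding).toEmbedding := fun V hV => by
    obtain ⟨B, hB, rfl⟩ := subset_map_iff.1 (hQ V hV)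
    exact mem_map_of_mem _ (mem_powerset.2 hB)
  obtain ⟨P, -, rfl⟩ := subset_map_iff.1 hQ'
  exact ⟨P, rfl⟩

lemma sum_ncFamilies_map {M : Type*} [AddCommMonoid M] (e : Fin m ↪o Fin n)
    (F : Finset (Finset (Fin n)) → M) :
    ∑ P ∈ ncFamilies (U.map e.toEmbedding) (S.map e.toEmbedding), F P =
      ∑ P ∈ ncFamilies U S, F (mapBlocks e P) := by
  refine (sum_bij (fun P _ => mapBlocks e P) (fun P hP => ?_) (fun _ _ _ _ h => map_injective _ h)
    (fun Q hQ => ?_) fun _ _ => rfl).symm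
  · exact mem_ncFamilies.2 ((isNCFamily_mapBlocks_iff e).2 (mem_ncFamilies.1 hP))
  · have hQ := mem_ncFamilies.1 hQ
    obtain ⟨P, rfl⟩ := exists_mapBlocks_eq e hQ.subset
    exact ⟨P, mem_ncFamilies.2 ((isNCFamily_mapBlocks_iff e).1 hQ), rfl⟩

end Partitions

section Moments

variable {m n : ℕ} {A : Type*}

/-- The functional on blocks obtained by applying `f` to the subword of `a` indexed by a block. -/
def wordFunctional (f : List A → ℂ) (a : Fin n → A) (V : Finset (Fin n)) : ℂ :=
  f ((V.sort (· ≤ ·)).map a)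

lemma wordFunctional_univ (f : List A → ℂ) (a : Fin n → A) :
    wordFunctional f a univ = f (List.ofFn a) := by
  rw [wordFunctional, Fin.sort_univ, List.ofFn_eq_map]

lemma wordFunctional_map (f : List A → ℂ) (a : Fin n → A) (e : Fin m ↪o Fin n)
    (V : Finset (Fin m)) :
    wordFunctional f a (V.map e.toEmbedding) = wordFunctional f (a ∘ e) V := by
  rw [wordFunctional, wordFunctional, ← List.map_map]
  congr 2
  exact (map_sort _ _ _ _ fun x _ y _ => e.le_iff_le.symm).symm

lemma finsum_mem_setOf_eq_sum_filter {ι M : Type*} [Fintype ι] [AddCommMonoid M] (p : ι → Prop)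
    [DecidablePred p] (F : ι → M) : ∑ᶠ i ∈ {i | p i}, F i = ∑ i with p i, F i := by
  simp [← finsum_mem_coe_finset]

lemma isIntervalPart_iff {π : NPart n} :
    IsIntervalPart π ↔
      IsNoncrossing π ∧ ∀ V ∈ π.parts, ∀ B ∈ π.parts, Encloses V B → V = B := by
  constructor
  · intro h
    refine ⟨fun a b c d hab hbc _ V hV W hW ha hc hb _ => ?_, fun V hV B hB hVB => ?_⟩
    · exact π.eq_of_mem_parts hV hW (h V hV a ha c hc b hab.le hbc.le) hb
    · obtain ⟨w, hw⟩ := π.nonempty_of_mem_parts hB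
      obtain ⟨⟨x, hx, hxw⟩, ⟨y, hy, hwy⟩⟩ := hVB w hw
      exact π.eq_of_mem_parts hV hB (h V hV x hx y hy w hxw hwy) hw
  · rintro ⟨hπ, h⟩ V hV x hx y hy z hxz hzy
    obtain ⟨B, hB, hz⟩ := π.exists_mem (mem_univ z)
    by_contra hzV
    have hne : ∀ u ∈ V, u ≠ z := fun u hu huz => hzV (huz ▸ hu)
    have hBV := (isNCFamily_parts hπ).nestedIn_of_between hB hV hx hy hz (hxz.lt_of_ne (hne x hx))
      (hzy.lt_of_ne (hne y hy).symm)
    exact hzV (h V hV B hB hBV ▸ hz)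

open Classical in
lemma eval_one_ncSum_wordFunctional (W : Finset (Finset (Fin n)) → ℂ[X]) (f : List A → ℂ)
    (a : Fin n → A) (e : Fin m ↪o Fin n) :
    (ncSum W (wordFunctional f a) (univ.map e.toEmbedding) ∅).eval 1 =
      ∑ π : NPart m with IsNoncrossing π,
        (W (mapBlocks e π.parts)).eval 1 * blockApply f (a ∘ e) π := by
  rw [ncSum, eval_finsetSum, ← map_empty e.toEmbedding, sum_ncFamilies_map, sum_ncFamilies_univ]
  refine sum_congr rfl fun π _ => ?_
  rw [eval_mul, eval_C, mul_comm, mapBlocks, prod_map]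
  congr 1
  exact prod_congr rfl fun V _ => wordFunctional_map f a e V

variable [Ring A] {φ : A → ℂ} (a : Fin n → A)

lemma eval_one_ncSum_forestPolynomial {h : List A → ℂ} (hh : MonotoneMC φ h) (hm : 1 ≤ m)
    (e : Fin m ↪o Fin n) :
    (ncSum (forestPolynomial ℂ Encloses) (wordFunctional h a) (univ.map e.toEmbedding) ∅).eval 1 =
      φ (List.ofFn (a ∘ e)).prod := by
  classical
  rw [hh m hm, finsum_mem_setOf_eq_sum_filter, eval_one_ncSum_wordFunctional]
  refine sum_congr rfl fun π _ => ?_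
  rw [eval_one_forestPolynomial, mapBlocks, treeFactorial_map (r := Encloses) _
    fun V _ B _ => encloses_map_iff e]
  rfl

lemma eval_one_ncSum_orderPolynomial {b : List A → ℂ} (hb : BooleanMC φ b) (hm : 1 ≤ m)
    (e : Fin m ↪o Fin n) :
    (ncSum (orderPolynomial ℂ Encloses) (wordFunctional b a) (univ.map e.toEmbedding) ∅).eval 1 =
      φ (List.ofFn (a ∘ e)).prod := by
  classical
  have hnest (π : NPart m) :
      (∀ V ∈ mapBlocks e π.parts, ∀ B ∈ mapBlocks e π.parts, Encloses V B → V = B) ↔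
        ∀ V ∈ π.parts, ∀ B ∈ π.parts, Encloses V B → V = B := by
    simp [mapBlocks, encloses_map_iff]
  simp only [hb m hm, finsum_mem_setOf_eq_sum_filter, eval_one_ncSum_wordFunctional,
    eval_one_orderPolynomial, hnest, ite_mul, one_mul, zero_mul, ← sum_filter, filter_filter,
    isIntervalPart_iff]

theorem ncSum_forestPolynomial_eq_ncSum_orderPolynomial {h b : List A → ℂ}
    (hh : MonotoneMC φ h) (hb : BooleanMC φ b) :
    ncSum (forestPolynomial ℂ Encloses) (wordFunctional h a) univ ∅ =
      ncSum (orderPolynomial ℂ Encloses) (wordFunctional b a) univ ∅ := by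
  have hF := (isForestWeight_forestPolynomial ℂ Encloses).isConvolutionSemigroup_ncSum
    (wordFunctional h a)
  have hG := (isForestWeight_orderPolynomial ℂ Encloses).isConvolutionSemigroup_ncSum
    (wordFunctional b a)
  refine hF.eq_of_eval_one_eq hG (fun U hU => ?_) (disjoint_empty_right _)
  rw [← U.map_orderEmbOfFin_univ rfl, eval_one_ncSum_forestPolynomial a hh hU.card_pos,
    eval_one_ncSum_orderPolynomial a hb hU.card_pos]

end Moments

section MuruaCoefficient

variable {n : ℕ}

lemma omegaNest_eq_coeff_one (π : NPart n) :
    omegaNest π = (orderPolynomial ℂ Encloses π.parts).coeff 1 := by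
  have hsurj (k : ℕ) : omegaNestK π k = surjCount Encloses π.parts k := rfl
  simp only [omegaNest, hsurj, coeff_one_orderPolynomial]

lemma exists_cut_of_not_isIrreducibleNC {π : NPart (n + 1)} (hπ : IsNoncrossing π)
    (hirr : ¬ IsIrreducibleNC π) :
    ∃ s < Fin.last n, ∀ V ∈ π.parts, (∀ x ∈ V, x ≤ s) ∨ ∀ x ∈ V, s < x := by
  obtain ⟨V, hV, h0⟩ := π.exists_mem (mem_univ (0 : Fin (n + 1)))
  have hmax := V.max'_mem ⟨0, h0⟩
  set s := V.max' ⟨0, h0⟩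
  have hlast : Fin.last n ∉ V := fun hl => hirr
    ⟨V, hV, fun i hi => (Fin.ext hi : i = 0) ▸ h0, fun i hi => (Fin.ext hi : i = Fin.last n) ▸ hl⟩
  refine ⟨s, (Fin.le_last s).lt_of_ne fun h => hlast (h ▸ hmax), fun W hW => ?_⟩
  by_contra! ⟨⟨y, hy, hsy⟩, ⟨x, hx, hxs⟩⟩
  have hVW : V ≠ W := by
    rintro rfl
    exact (V.le_max' y hy).not_gt hsy
  have hne : ∀ u ∈ V, u ≠ x := by
    rintro u hu rfl
    exact hVW (π.eq_of_mem_parts hV hW hu hx)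
  exact hVW (hπ 0 x s y ((Fin.zero_le x).lt_of_ne (hne 0 h0)) (hxs.lt_of_ne (hne s hmax).symm) hsy
    V hV W hW h0 hmax hx hy)

lemma omegaNest_eq_zero {π : NPart n} (hπ : IsNoncrossing π) (hirr : ¬ IsIrreducibleNC π) :
    omegaNest π = 0 := by
  obtain _ | n := n
  · have hparts : π.parts = ∅ := eq_empty_of_forall_notMem fun V hV =>
      (π.nonempty_of_mem_parts hV).ne_empty (eq_empty_of_isEmpty V)
    simp [omegaNest, hparts]
  · obtain ⟨s, hs, hcut⟩ := exists_cut_of_not_isIrreducibleNC hπ hirr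
    rw [omegaNest_eq_coeff_one]
    exact (isForestWeight_orderPolynomial ℂ Encloses).coeff_one_of_cut (isNCFamily_parts hπ) hcut
      ⟨s, mem_univ s, le_rfl⟩ ⟨Fin.last n, mem_univ _, hs⟩

variable (f : Finset (Fin n) → ℂ)

lemma coeff_one_ncSum_forestPolynomial (hn : 1 ≤ n) :
    (ncSum (forestPolynomial ℂ Encloses) f univ ∅).coeff 1 = f univ := by
  have huniv : IsNCFamily univ ∅ {(univ : Finset (Fin n))} := by
    have : Nonempty (Fin n) := ⟨⟨0, hn⟩⟩
    constructor <;> simp [Unsplit]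
  rw [ncSum, finsetSum_coeff, sum_eq_single_of_mem _ (mem_ncFamilies.2 huniv)]
  · rw [prod_singleton, coeff_C_mul,
      coeff_one_forestPolynomial_singleton (r := Encloses) (nestedIn_refl _), mul_one]
  · intro P hP hne
    rw [coeff_C_mul, coeff_one_forestPolynomial_eq_zero, mul_zero]
    intro h1
    obtain ⟨V, rfl⟩ := card_eq_one.1 h1
    have hV := (mem_ncFamilies.1 hP).biUnion_eq
    rw [singleton_biUnion, id] at hV
    exact hne (congrArg _ hV)

lemma coeff_one_ncSum_orderPolynomial :
    (ncSum (orderPolynomial ℂ Encloses) f univ ∅).coeff 1 =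
      ∑ᶠ π ∈ {π : NPart n | IsNoncrossing π ∧ IsIrreducibleNC π},
        omegaNest π * ∏ V ∈ π.parts, f V := by
  classical
  simp only [ncSum, finsetSum_coeff, sum_ncFamilies_univ, coeff_C_mul, ← omegaNest_eq_coeff_one,
    finsum_mem_setOf_eq_sum_filter, ← filter_filter, mul_comm (omegaNest _)]
  refine (sum_filter_of_ne fun π hπ hne => ?_).symm
  by_contra hirr
  exact hne (by rw [omegaNest_eq_zero (mem_filter.1 hπ).2 hirr, mul_zero])

end MuruaCoefficient

theorem monotone_cumulants_eq_sum_boolean_cumulants_general {A : Type*} [Ring A] {φ : A → ℂ}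
    {h b : List A → ℂ} (hh : MonotoneMC φ h) (hb : BooleanMC φ b) {n : ℕ} (hn : 1 ≤ n)
    (a : Fin n → A) :
    h (List.ofFn a) =
      ∑ᶠ π ∈ {π : NPart n | IsNoncrossing π ∧ IsIrreducibleNC π},
        omegaNest π * blockApply b a π := by
  calc h (List.ofFn a)
      = (ncSum (forestPolynomial ℂ Encloses) (wordFunctional h a) univ ∅).coeff 1 := by
        rw [coeff_one_ncSum_forestPolynomial _ hn, wordFunctional_univ]
    _ = (ncSum (orderPolynomial ℂ Encloses) (wordFunctional b a) univ ∅).coeff 1 := by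
        rw [ncSum_forestPolynomial_eq_ncSum_orderPolynomial a hh hb]
    _ = _ := coeff_one_ncSum_orderPolynomial _

end MonotoneBoolean

/-- Monotone cumulants in terms of Boolean cumulants:
`h_n(a_1,…,a_n) = Σ_{π ∈ NC_irr(n)} ω(t(π)) b_π(a_1,…,a_n)`. -/
theorem monotone_cumulants_eq_sum_boolean_cumulants
    (A : Type*) [Ring A] [Algebra ℂ A] (φ : A →ₗ[ℂ] ℂ) (hφ : φ 1 = 1)
    (h : List A → ℂ) (hmch : MonotoneMC (fun x => φ x) h)
    (b : List A → ℂ) (hmcb : BooleanMC (fun x => φ x) b)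
    (n : ℕ) (hn : 1 ≤ n) (a : Fin n → A) :
    h (List.ofFn a) =
      ∑ᶠ π ∈ {π : NPart n | IsNoncrossing π ∧ IsIrreducibleNC π},
        omegaNest π * blockApply b a π :=
  monotone_cumulants_eq_sum_boolean_cumulants_general hmch hmcb hn a
end

section
/- Let A be a ℂ-vector space and T(T_+(A)) the double tensor algebra with coproduct Δ and half-coproducts Δ_≺, Δ_≻. For every character Φ on T(T_+(A)) there exists a unique triple (κ, β, ρ) of infinitesimal characters such that Φ = exp*(ρ) = E_≺(κ) = E_≻(β). In particular, κ and β are the unique solutions of the fixed-point equations Φ = ε + κ ≺ Φ and Φ = ε + Φ ≻ β, respectively. Conversely, for every infinitesimal character α, each of exp*(α), E_≺(α) and E_≻(α) is a character. -/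
section Words

variable {A : Type*}

/-- A word: a nonempty list of elements of `A` (an element `a_1 ⋯ a_n ∈ A^{⊗n}`, `n ≥ 1`). -/
def WordNE (A : Type*) := {l : List A // l ≠ []}

/-- A sentence: a bar product `w_1 | ⋯ | w_m` of words, an element of the basis of the
double tensor algebra `T(T_+(A))`. The empty sentence is the unit `1`. -/
abbrev Sentence (A : Type*) := List (WordNE A)

open Classical in
/-- Turn a list of lists into a sentence (the lists arising below are always nonempty). -/
noncomputable def mkWords (ls : List (List A)) : Sentence A :=
  (ls.filter fun l => decide (l ≠ [])).attach.map fun x =>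
    ⟨x.1, by have h := List.of_mem_filter x.2; simpa using h⟩

/-- Group a list of natural numbers into maximal runs of consecutive integers. -/
def natRuns : List ℕ → List (List ℕ)
  | [] => []
  | x :: xs =>
    match natRuns xs with
    | (y :: ys) :: rest => if x + 1 = y then (x :: y :: ys) :: rest else [x] :: (y :: ys) :: rest
    | _ => [[x]]

open Classical in
/-- The two sides `a_S ⊗ a_{J^S}` of the cut of a word `w` along a subset `S` of its
letter positions: `a_S` is the subword at the positions of `S` (the unit, i.e. the empty
sentence, if `S = ∅`), and `a_{J^S}` is the bar product of the subwords corresponding to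
the maximal intervals of the complement of `S`. -/
noncomputable def wordCut [Zero A] (w : WordNE A) (S : Finset (Fin w.1.length)) :
    Sentence A × Sentence A :=
  (mkWords [(S.sort (· ≤ ·)).map w.1.get],
   mkWords (((natRuns ((((Finset.univ : Finset (Fin w.1.length)) \ S).sort (· ≤ ·)).map
      Fin.val))).map fun r => r.map fun i => w.1.getD i 0))

/-- All terms of the coproduct `Δ` of `T(T_+(A))` on a sentence:
`Δ(a_1⋯a_n) = Σ_{S ⊆ [n]} a_S ⊗ a_{J^S}`, extended multiplicatively to bar products. -/
noncomputable def sentenceCuts [Zero A] : Sentence A → List (Sentence A × Sentence A)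
  | [] => [([], [])]
  | w :: ws => (Finset.univ : Finset (Finset (Fin w.1.length))).toList.flatMap fun S =>
      (sentenceCuts ws).map fun pr => ((wordCut w S).1 ++ pr.1, (wordCut w S).2 ++ pr.2)

open Classical in
/-- The terms of the half-coproduct `Δ_≺` (sum over `S` containing the first letter,
`Δ_≺(w_1|⋯|w_m) = Δ_≺(w_1) | Δ(w_2|⋯|w_m)`). -/
noncomputable def sentenceCutsPrec [Zero A] : Sentence A → List (Sentence A × Sentence A)
  | [] => []
  | w :: ws => (((Finset.univ : Finset (Finset (Fin w.1.length))).filter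
        fun S => ∃ j ∈ S, j.val = 0)).toList.flatMap fun S =>
      (sentenceCuts ws).map fun pr => ((wordCut w S).1 ++ pr.1, (wordCut w S).2 ++ pr.2)

open Classical in
/-- The terms of the half-coproduct `Δ_≻` (sum over `S` not containing the first letter). -/
noncomputable def sentenceCutsSucc [Zero A] : Sentence A → List (Sentence A × Sentence A)
  | [] => []
  | w :: ws => (((Finset.univ : Finset (Finset (Fin w.1.length))).filter
        fun S => ∀ j ∈ S, j.val ≠ 0)).toList.flatMap fun S =>
      (sentenceCuts ws).map fun pr => ((wordCut w S).1 ++ pr.1, (wordCut w S).2 ++ pr.2)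

/-- The convolution product `f * g = m_ℂ ∘ (f ⊗ g) ∘ Δ` on linear functionals of
`T(T_+(A))` (described on the basis of sentences). -/
noncomputable def convW [Zero A] (f g : Sentence A → ℂ) : Sentence A → ℂ :=
  fun s => ((sentenceCuts s).map fun pr => f pr.1 * g pr.2).sum

/-- The left half-shuffle product `f ≺ g = m_ℂ ∘ (f ⊗ g) ∘ Δ_≺`. -/
noncomputable def precW [Zero A] (f g : Sentence A → ℂ) : Sentence A → ℂ :=
  fun s => ((sentenceCutsPrec s).map fun pr => f pr.1 * g pr.2).sum

/-- The right half-shuffle product `f ≻ g = m_ℂ ∘ (f ⊗ g) ∘ Δ_≻`. -/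
noncomputable def succW [Zero A] (f g : Sentence A → ℂ) : Sentence A → ℂ :=
  fun s => ((sentenceCutsSucc s).map fun pr => f pr.1 * g pr.2).sum

open Classical in
/-- The counit `ε` of `T(T_+(A))` as a functional. -/
noncomputable def epsW : Sentence A → ℂ := fun s => if s = [] then 1 else 0

/-- A character of `T(T_+(A))`: a unital multiplicative functional. -/
def IsCharW (Φ : Sentence A → ℂ) : Prop :=
  Φ [] = 1 ∧ ∀ s t : Sentence A, Φ (s ++ t) = Φ s * Φ t

/-- An infinitesimal character of `T(T_+(A))`: it vanishes on the unit and on bar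
products of two or more words. -/
def IsInfCharW (α : Sentence A → ℂ) : Prop :=
  α [] = 0 ∧ ∀ s t : Sentence A, s ≠ [] → t ≠ [] → α (s ++ t) = 0

/-- Convolution powers `f^{*k}` (with `f^{*0} = ε`). -/
noncomputable def convPowW [Zero A] (f : Sentence A → ℂ) : ℕ → Sentence A → ℂ
  | 0 => epsW
  | k + 1 => convW f (convPowW f k)

/-- Left half-shuffle powers `α^{≺k}`, with `α^{≺0} = ε` and `α^{≺k} = α ≺ α^{≺(k−1)}`. -/
noncomputable def precPowW [Zero A] (α : Sentence A → ℂ) : ℕ → Sentence A → ℂ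
  | 0 => epsW
  | k + 1 => precW α (precPowW α k)

/-- Right half-shuffle powers `α^{≻k}`, with `α^{≻0} = ε` and `α^{≻k} = α^{≻(k−1)} ≻ α`. -/
noncomputable def succPowW [Zero A] (α : Sentence A → ℂ) : ℕ → Sentence A → ℂ
  | 0 => epsW
  | k + 1 => succW (succPowW α k) α

/-- The convolution exponential `exp^*(α) = Σ_{k≥0} α^{*k}/k!`. -/
noncomputable def expStarW [Zero A] (α : Sentence A → ℂ) : Sentence A → ℂ :=
  fun s => ∑ᶠ k : ℕ, ((k.factorial : ℂ))⁻¹ * convPowW α k s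

/-- The left half-shuffle exponential `E_≺(α) = Σ_{k≥0} α^{≺k}`. -/
noncomputable def ePrecW [Zero A] (α : Sentence A → ℂ) : Sentence A → ℂ :=
  fun s => ∑ᶠ k : ℕ, precPowW α k s

/-- The right half-shuffle exponential `E_≻(α) = Σ_{k≥0} α^{≻k}`. -/
noncomputable def eSuccW [Zero A] (α : Sentence A → ℂ) : Sentence A → ℂ :=
  fun s => ∑ᶠ k : ℕ, succPowW α k s

/-- The character `Φ : T(T_+(A)) → ℂ` extending `φ`:
`Φ(w_1|⋯|w_m) = φ(w_1)⋯φ(w_m)` with `φ` applied to the internal product of each word. -/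
noncomputable def charW [Monoid A] (φ : A → ℂ) : Sentence A → ℂ :=
  fun s => (s.map fun w => φ w.1.prod).prod

end Words

/-!
The three exponentials are series `∑ c_k L_α^k ε`, where `L_α` is multiplication by `α` for a
graded product: `∗`, `≺` or the opposite of `≻`. On a word `w` only the linear term involves `α(w)`,
so the exponential of `α` at `w` is `α(w)` plus an expression in the values of `α` on shorter words.
A character and an infinitesimal character are both determined by their values on words, hence `α`
is recovered from its exponential by recursion on the length of words.

The half-shuffle exponentials solve fixed-point equations in which multiplication by `α` acts only
on the leading factor of a bar product, and multiplicativity follows by induction on the degree.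
Convolution by `α` satisfies a Leibniz rule with respect to the bar product, so its powers obey the
binomial formula, which makes `exp^*(α)` multiplicative.
-/

theorem existsUnique_isFixedPt_of_causal {X Y : Type*} [Nonempty Y] {r : X → X → Prop}
    (hr : WellFounded r) {G : (X → Y) → X → Y}
    (hG : ∀ f g x, (∀ y, r y x → f y = g y) → G f x = G g x) :
    ∃! f, Function.IsFixedPt G f := by
  classical
  let f : X → Y := hr.fix fun x ih =>
    G (fun y => if h : r y x then ih y h else Classical.ofNonempty) x
  have hf : Function.IsFixedPt G f := funext fun x => by
    rw [show f x = _ from hr.fix_eq _ x]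
    exact hG _ _ _ fun y hy => by rw [dif_pos hy]
  refine ⟨f, hf, fun g hg => funext fun x => ?_⟩
  induction x using hr.induction with
  | _ x ih => rw [← hg, ← hf, hG g f x ih]

theorem finsum_mul_finsum_eq_finsum_sum_antidiagonal {R : Type*} [CommSemiring R] {a b : ℕ → R}
    (ha : a.HasFiniteSupport) (hb : b.HasFiniteSupport) :
    (∑ᶠ i, a i) * ∑ᶠ j, b j =
      ∑ᶠ k, ∑ m ∈ Finset.HasAntidiagonal.antidiagonal k, a m.1 * b m.2 := by
  have finsum_coeff (p : Polynomial R) : ∑ᶠ k, p.coeff k = p.eval 1 := by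
    rw [Polynomial.eval_eq_sum, Polynomial.sum, finsum_eq_sum_of_support_subset (s := p.support)]
    · simp
    · intro k
      simp
  have exists_coeff_eq {c : ℕ → R} (hc : c.HasFiniteSupport) : ∃ p : Polynomial R, p.coeff = c :=
    ⟨⟨.ofCoeff (Finsupp.ofSupportFinite c hc)⟩, rfl⟩
  obtain ⟨p, rfl⟩ := exists_coeff_eq ha
  obtain ⟨q, rfl⟩ := exists_coeff_eq hb
  simp only [← Polynomial.coeff_mul, finsum_coeff, Polynomial.eval_mul]

section Cuts

variable {A : Type*}

theorem WordNE.length_pos (w : WordNE A) : 0 < w.1.length :=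
  List.length_pos_iff.mpr w.2

/-- The words of a sentence as plain lists, used to compute with the output of `mkWords`. -/
def Sentence.words (s : Sentence A) : List (List A) := s.map fun w => w.1

/-- The grading of the double tensor algebra: the total number of letters of a sentence. -/
def Sentence.degree (s : Sentence A) : ℕ := s.words.flatten.length

@[simp] theorem Sentence.degree_nil : Sentence.degree ([] : Sentence A) = 0 := rfl

@[simp] theorem Sentence.degree_append (s t : Sentence A) :
    Sentence.degree (s ++ t) = s.degree + t.degree := by
  simp [degree, words]

@[simp] theorem Sentence.degree_cons (w : WordNE A) (s : Sentence A) :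
    Sentence.degree (w :: s) = w.1.length + s.degree := by
  simp [degree, words]

@[simp] theorem Sentence.degree_eq_zero {s : Sentence A} : s.degree = 0 ↔ s = [] := by
  cases s with
  | nil => simp
  | cons w s => simp [w.2]

theorem Sentence.degree_pos {s : Sentence A} (h : s ≠ []) : 0 < s.degree :=
  Nat.pos_of_ne_zero (mt degree_eq_zero.mp h)

theorem Sentence.words_injective : Function.Injective (words (A := A)) :=
  List.map_injective_iff.mpr Subtype.val_injective

theorem words_mkWords (ls : List (List A)) :
    (mkWords ls).words = ls.filter fun l => !l.isEmpty := by
  refine List.map_map.trans <| (List.attach_map_subtype_val _).trans <|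
    List.filter_congr fun l _ => ?_
  cases l <;> simp

theorem degree_mkWords (ls : List (List A)) : (mkWords ls).degree = ls.flatten.length := by
  rw [Sentence.degree, words_mkWords, List.flatten_filter_not_isEmpty]

theorem mkWords_singleton (w : WordNE A) : mkWords [w.1] = [w] :=
  Sentence.words_injective <| by rw [words_mkWords]; simp [Sentence.words, w.2]

theorem mkWords_singleton_nil : mkWords [([] : List A)] = [] :=
  Sentence.words_injective <| by rw [words_mkWords]; simp [Sentence.words]

theorem nil_notMem_natRuns (l : List ℕ) : [] ∉ natRuns l := by
  fun_induction natRuns l <;> simp_all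

theorem flatten_natRuns (l : List ℕ) : (natRuns l).flatten = l := by
  fun_induction natRuns l with
  | case1 => rfl
  | case2 => simp_all
  | case3 => simp_all
  | case4 x xs h ih =>
    rcases hruns : natRuns xs with _ | ⟨_ | ⟨y, ys⟩, rest⟩
    · simpa [hruns, eq_comm] using ih
    · exact absurd (hruns ▸ List.mem_cons_self) (nil_notMem_natRuns xs)
    · exact absurd hruns (h y ys rest)

theorem natRuns_range' (a n : ℕ) :
    natRuns (List.range' a (n + 1)) = [List.range' a (n + 1)] := by
  induction n generalizing a with
  | zero => rfl
  | succ n ih =>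
    rw [List.range'_succ, natRuns, ih, List.range'_succ]
    simp

/-- The product of `T(T_+(A)) ⊗ T(T_+(A))` on sums of pure tensors, given by lists of terms. -/
def barProd (L M : List (Sentence A × Sentence A)) : List (Sentence A × Sentence A) :=
  L.flatMap fun p => M.map fun q => (p.1 ++ q.1, p.2 ++ q.2)

theorem barProd_assoc (L M N : List (Sentence A × Sentence A)) :
    barProd (barProd L M) N = barProd L (barProd M N) := by
  simp [barProd, List.flatMap_assoc, List.flatMap_map, List.map_flatMap, Function.comp_def]

theorem mem_barProd {L M : List (Sentence A × Sentence A)} {p : Sentence A × Sentence A} :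
    p ∈ barProd L M ↔ ∃ q ∈ L, ∃ r ∈ M, (q.1 ++ r.1, q.2 ++ r.2) = p := by
  simp [barProd]

theorem sum_map_barProd {R : Type*} [AddCommMonoid R] (L M : List (Sentence A × Sentence A))
    (h : Sentence A × Sentence A → R) :
    ((barProd L M).map h).sum =
      (L.map fun p => (M.map fun q => h (p.1 ++ q.1, p.2 ++ q.2)).sum).sum := by
  simp [barProd, List.flatMap_def, List.map_flatten, List.sum_flatten, Function.comp_def]

open Classical in
/-- The position sets that contain the first letter, which index `Δ_≺`. -/
noncomputable def precPositions (w : WordNE A) : Finset (Finset (Fin w.1.length)) :=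
  Finset.univ.filter fun S => ∃ j ∈ S, j.val = 0

open Classical in
/-- The position sets that avoid the first letter, which index `Δ_≻`. -/
noncomputable def succPositions (w : WordNE A) : Finset (Finset (Fin w.1.length)) :=
  Finset.univ.filter fun S => ∀ j ∈ S, j.val ≠ 0

theorem empty_notMem_precPositions (w : WordNE A) : ∅ ∉ precPositions w := by
  simp [precPositions]

theorem univ_mem_precPositions (w : WordNE A) : Finset.univ ∈ precPositions w := by
  simpa [precPositions] using ⟨⟨0, w.length_pos⟩, rfl⟩

theorem empty_mem_succPositions (w : WordNE A) : ∅ ∈ succPositions w := by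
  simp [succPositions]

theorem univ_notMem_succPositions (w : WordNE A) : Finset.univ ∉ succPositions w := by
  simpa [succPositions] using ⟨⟨0, w.length_pos⟩, rfl⟩

variable [Zero A] {w : WordNE A} {S : Finset (Fin w.1.length)}

@[simp] theorem wordCut_empty (w : WordNE A) : wordCut w ∅ = ([], [w]) := by
  have hruns : natRuns (List.range w.1.length) = [List.range w.1.length] := by
    obtain ⟨n, hn⟩ := Nat.exists_eq_add_of_le' w.length_pos
    rw [hn, List.range_eq_range', natRuns_range']
  have hmap : (List.range w.1.length).map (fun i => w.1.getD i 0) = w.1 :=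
    List.ext_getElem (by simp) fun i _ h => by simp [h]
  simp only [wordCut, Finset.sort_empty, Finset.sdiff_empty, Fin.sort_univ,
    List.map_coe_finRange_eq_range, hruns, List.map_cons, List.map_nil, hmap, mkWords_singleton,
    mkWords_singleton_nil]

@[simp] theorem wordCut_univ (w : WordNE A) : wordCut w Finset.univ = ([w], []) := by
  simp only [wordCut, Finset.sdiff_self, Finset.sort_empty, List.map_nil, natRuns, Fin.sort_univ,
    List.map_get_finRange, mkWords_singleton]
  rfl

theorem degree_wordCut_fst (w : WordNE A) (S : Finset (Fin w.1.length)) :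
    (wordCut w S).1.degree = S.card := by
  simp [wordCut, degree_mkWords]

theorem degree_wordCut_snd (w : WordNE A) (S : Finset (Fin w.1.length)) :
    (wordCut w S).2.degree = w.1.length - S.card := by
  simp [wordCut, degree_mkWords, ← List.map_flatten, flatten_natRuns,
    Finset.card_sdiff_of_subset (Finset.subset_univ S)]

theorem degree_wordCut_fst_add_snd (w : WordNE A) (S : Finset (Fin w.1.length)) :
    (wordCut w S).1.degree + (wordCut w S).2.degree = w.1.length := by
  have hS : S.card ≤ w.1.length := by simpa using S.card_le_univ
  rw [degree_wordCut_fst, degree_wordCut_snd, Nat.add_sub_cancel' hS]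

theorem wordCut_fst_eq_nil : (wordCut w S).1 = [] ↔ S = ∅ := by
  rw [← Sentence.degree_eq_zero, degree_wordCut_fst, Finset.card_eq_zero]

theorem wordCut_snd_eq_nil : (wordCut w S).2 = [] ↔ S = Finset.univ := by
  have h := degree_wordCut_fst_add_snd w S
  rw [degree_wordCut_fst] at h
  rw [← Sentence.degree_eq_zero, ← Finset.card_eq_iff_eq_univ, Fintype.card_fin]
  omega

/-- The terms `a_S ⊗ a_{J^S}` of the coproduct of a word for the position sets `S ∈ F`. -/
noncomputable def wordCuts (w : WordNE A) (F : Finset (Finset (Fin w.1.length))) :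
    List (Sentence A × Sentence A) :=
  F.toList.map (wordCut w)

theorem sentenceCuts_cons (w : WordNE A) (s : Sentence A) :
    sentenceCuts (w :: s) = barProd (wordCuts w Finset.univ) (sentenceCuts s) := by
  rw [barProd, wordCuts, List.flatMap_map, sentenceCuts]

theorem sentenceCuts_append (s t : Sentence A) :
    sentenceCuts (s ++ t) = barProd (sentenceCuts s) (sentenceCuts t) := by
  induction s with
  | nil => simp [sentenceCuts, barProd]
  | cons w s ih => rw [List.cons_append, sentenceCuts_cons, ih, sentenceCuts_cons, barProd_assoc]

/-- The terms of the coproduct whose position sets in the leading word `w` are restricted to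
`F w`; this covers both half-coproducts. -/
noncomputable def leadingCuts (F : ∀ w : WordNE A, Finset (Finset (Fin w.1.length))) :
    Sentence A → List (Sentence A × Sentence A)
  | [] => []
  | w :: s => barProd (wordCuts w (F w)) (sentenceCuts s)

variable {F : ∀ w : WordNE A, Finset (Finset (Fin w.1.length))}

theorem leadingCuts_precPositions :
    leadingCuts precPositions = sentenceCutsPrec (A := A) := by
  funext s
  cases s with
  | nil => rfl
  | cons w s => rw [leadingCuts, barProd, wordCuts, List.flatMap_map]; rfl

theorem leadingCuts_succPositions :
    leadingCuts succPositions = sentenceCutsSucc (A := A) := by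
  funext s
  cases s with
  | nil => rfl
  | cons w s => rw [leadingCuts, barProd, wordCuts, List.flatMap_map]; rfl

theorem leadingCuts_append {s : Sentence A} (hs : s ≠ []) (t : Sentence A) :
    leadingCuts F (s ++ t) = barProd (leadingCuts F s) (sentenceCuts t) := by
  obtain ⟨w, s, rfl⟩ := List.exists_cons_of_ne_nil hs
  rw [List.cons_append, leadingCuts, leadingCuts, sentenceCuts_append, barProd_assoc]

theorem exists_of_mem_leadingCuts {s : Sentence A} {p : Sentence A × Sentence A}
    (hp : p ∈ leadingCuts F s) : ∃ w t, s = w :: t ∧ ∃ S ∈ F w, ∃ q ∈ sentenceCuts t,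
      ((wordCut w S).1 ++ q.1, (wordCut w S).2 ++ q.2) = p := by
  cases s with
  | nil => simp [leadingCuts] at hp
  | cons w s => exact ⟨w, s, rfl, by simpa [leadingCuts, barProd, wordCuts] using hp⟩

theorem fst_ne_nil_of_mem_leadingCuts (hF : ∀ w, ∅ ∉ F w) {s : Sentence A}
    {p : Sentence A × Sentence A} (hp : p ∈ leadingCuts F s) : p.1 ≠ [] := by
  obtain ⟨w, t, rfl, S, hS, q, -, rfl⟩ := exists_of_mem_leadingCuts hp
  simp [wordCut_fst_eq_nil, ne_of_mem_of_not_mem hS (hF w)]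

theorem snd_ne_nil_of_mem_leadingCuts (hF : ∀ w, Finset.univ ∉ F w) {s : Sentence A}
    {p : Sentence A × Sentence A} (hp : p ∈ leadingCuts F s) : p.2 ≠ [] := by
  obtain ⟨w, t, rfl, S, hS, q, -, rfl⟩ := exists_of_mem_leadingCuts hp
  simp [wordCut_snd_eq_nil, ne_of_mem_of_not_mem hS (hF w)]

theorem degree_add_degree_of_mem_sentenceCuts {s : Sentence A} {p : Sentence A × Sentence A}
    (hp : p ∈ sentenceCuts s) : p.1.degree + p.2.degree = s.degree := by
  induction s generalizing p with
  | nil => simp_all [sentenceCuts]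
  | cons w s ih =>
    rw [sentenceCuts_cons] at hp
    obtain ⟨_, _, h, S, -, q, hq, rfl⟩ := exists_of_mem_leadingCuts
      (F := fun _ => Finset.univ) (s := w :: s) hp
    obtain ⟨rfl, rfl⟩ := List.cons.inj h
    rw [Sentence.degree_append, Sentence.degree_append, Sentence.degree_cons, ← ih hq,
      ← degree_wordCut_fst_add_snd w S, add_add_add_comm]

theorem leadingCuts_subset (s : Sentence A) : leadingCuts F s ⊆ sentenceCuts s := by
  intro p hp
  obtain ⟨w, t, rfl, S, -, q, hq, rfl⟩ := exists_of_mem_leadingCuts hp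
  exact sentenceCuts_cons w t ▸ mem_barProd.mpr ⟨_, by simp [wordCuts], q, hq, rfl⟩

end Cuts

section Functionals

variable {A : Type*} {α : Sentence A → ℂ}

@[simp] theorem epsW_nil : epsW ([] : Sentence A) = 1 := if_pos rfl

theorem epsW_of_ne_nil {s : Sentence A} (hs : s ≠ []) : epsW s = 0 := if_neg hs

theorem epsW_append (s t : Sentence A) : epsW (s ++ t) = epsW s * epsW t := by
  by_cases hs : s = [] <;> simp [epsW, hs]

theorem IsInfCharW.apply_append (hα : IsInfCharW α) (s t : Sentence A) :
    α (s ++ t) = α s * epsW t + epsW s * α t := by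
  by_cases hs : s = []
  · simp [hs, hα.1]
  · by_cases ht : t = []
    · simp [ht, hα.1]
    · simp [epsW_of_ne_nil, hs, ht, hα.2 s t hs ht]

variable [Zero A]

theorem sum_wordCuts_epsW_fst {w : WordNE A} {F : Finset (Finset (Fin w.1.length))} (hF : ∅ ∈ F)
    (g : Sentence A → ℂ) : ((wordCuts w F).map fun p => epsW p.1 * g p.2).sum = g [w] := by
  rw [wordCuts, List.map_map, Finset.sum_map_toList, Finset.sum_eq_single_of_mem ∅ hF]
  · simp
  · intro S _ hS
    simp [epsW_of_ne_nil (mt wordCut_fst_eq_nil.mp hS)]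

theorem sum_wordCuts_epsW_snd {w : WordNE A} {F : Finset (Finset (Fin w.1.length))}
    (hF : Finset.univ ∈ F) (f : Sentence A → ℂ) :
    ((wordCuts w F).map fun p => f p.1 * epsW p.2).sum = f [w] := by
  rw [wordCuts, List.map_map, Finset.sum_map_toList, Finset.sum_eq_single_of_mem _ hF]
  · simp
  · intro S _ hS
    simp [epsW_of_ne_nil (mt wordCut_snd_eq_nil.mp hS)]

theorem epsW_convW (g : Sentence A → ℂ) : convW epsW g = g := by
  funext s
  induction s generalizing g with
  | nil => simp [convW, sentenceCuts]
  | cons w s ih =>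
    have shift (u : Sentence A) :
        ((sentenceCuts s).map fun q => epsW q.1 * g (u ++ q.2)).sum = g (u ++ s) :=
      ih fun t => g (u ++ t)
    simp only [convW, sentenceCuts_cons, sum_map_barProd, epsW_append, mul_assoc,
      List.sum_map_mul_left, shift]
    exact sum_wordCuts_epsW_fst (Finset.mem_univ _) fun u => g (u ++ s)

theorem convW_epsW (f : Sentence A → ℂ) : convW f epsW = f := by
  funext s
  induction s generalizing f with
  | nil => simp [convW, sentenceCuts]
  | cons w s ih =>
    have shift (u : Sentence A) :
        ((sentenceCuts s).map fun q => f (u ++ q.1) * epsW q.2).sum = f (u ++ s) :=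
      ih fun t => f (u ++ t)
    simp only [convW, sentenceCuts_cons, sum_map_barProd, epsW_append, mul_left_comm _ (epsW _),
      List.sum_map_mul_left, shift]
    simp only [mul_comm (epsW _)]
    exact sum_wordCuts_epsW_snd (Finset.mem_univ _) fun u => f (u ++ s)

end Functionals

section Products

variable {A : Type*}

/-- A bilinear product on the functionals of the double tensor algebra. -/
abbrev FunctionalProduct (A : Type*) :=
  (Sentence A → ℂ) →ₗ[ℂ] (Sentence A → ℂ) →ₗ[ℂ] (Sentence A → ℂ)

/-- A product of functionals dual to a graded coproduct, such that `ε` is a right unit on words.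
The products `∗` and `≺` and the opposite of `≻` are of this kind. -/
structure IsGradedProduct (B : FunctionalProduct A) : Prop where
  congr {f f' g g' : Sentence A → ℂ} {s : Sentence A}
    (h : ∀ t u : Sentence A, t.degree + u.degree = s.degree → f t * g u = f' t * g' u) :
    B f g s = B f' g' s
  apply_epsW (f : Sentence A → ℂ) (w : WordNE A) : B f epsW [w] = f [w]

/-- A graded product for which multiplication by an infinitesimal character acts only on the
leading words of a sentence; this abstracts `≺` and the opposite of `≻`. -/
structure IsHalfShuffle (B : FunctionalProduct A) : Prop extends IsGradedProduct B where
  apply_append {α : Sentence A → ℂ} (hα : IsInfCharW α) (g : Sentence A → ℂ) {s : Sentence A}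
    (hs : s ≠ []) (t : Sentence A) : B α g (s ++ t) = B α (fun x => g (x ++ t)) s

/-- The series `∑ c_k α^k` of a functional `α`, where `α^0 = ε` and `α^(k + 1) = B α (α^k)`;
it specializes to `exp^*`, `E_≺` and `E_≻`. -/
noncomputable def productSeries (B : FunctionalProduct A) (c : ℕ → ℂ) (α : Sentence A → ℂ) :
    Sentence A → ℂ :=
  fun s => ∑ᶠ k, c k * (B α ^ k) epsW s

variable {B : FunctionalProduct A} {c : ℕ → ℂ} {α α' g g' : Sentence A → ℂ} {s : Sentence A}

namespace IsGradedProduct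

theorem congr_of_degree_lt (hB : IsGradedProduct B) (hα : α [] = 0) (hα' : α' [] = 0)
    (h : ∀ t : Sentence A, t.degree ≤ s.degree → α t = α' t)
    (hg : ∀ u : Sentence A, u.degree < s.degree → g u = g' u) : B α g s = B α' g' s :=
  hB.congr fun t u htu => by
    obtain rfl | ht := eq_or_ne t []
    · rw [hα, hα', zero_mul, zero_mul]
    · have ht := Sentence.degree_pos ht
      rw [h t (by lia), hg u (by lia)]

theorem congr_of_apply_nil (hB : IsGradedProduct B) (hα : α [] = 0) (hα' : α' [] = 0)
    (hg : g [] = 0) (hg' : g' [] = 0)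
    (h : ∀ t : Sentence A, t.degree < s.degree → α t = α' t)
    (hgg' : ∀ u : Sentence A, u.degree < s.degree → g u = g' u) : B α g s = B α' g' s :=
  hB.congr fun t u htu => by
    obtain rfl | ht := eq_or_ne t []
    · rw [hα, hα', zero_mul, zero_mul]
    obtain rfl | hu := eq_or_ne u []
    · rw [hg, hg', mul_zero, mul_zero]
    have ht := Sentence.degree_pos ht
    have hu := Sentence.degree_pos hu
    rw [h t (by lia), hgg' u (by lia)]

theorem pow_apply_epsW_eq_zero (hB : IsGradedProduct B) (hα : α [] = 0) {k : ℕ}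
    (hk : s.degree < k) : (B α ^ k) epsW s = 0 := by
  induction k generalizing s with
  | zero => exact absurd hk (Nat.not_lt_zero _)
  | succ k ih =>
    have vanish : B α ((B α ^ k) epsW) s = B α 0 s :=
      hB.congr_of_degree_lt hα hα (fun _ _ => rfl) fun u hu => ih (by lia)
    rw [pow_succ', Module.End.mul_apply, vanish, map_zero, Pi.zero_apply]

theorem pow_apply_epsW_congr (hB : IsGradedProduct B) (hα : α [] = 0) (hα' : α' [] = 0)
    (h : ∀ t : Sentence A, t.degree ≤ s.degree → α t = α' t) (k : ℕ) :
    (B α ^ k) epsW s = (B α' ^ k) epsW s := by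
  induction k generalizing s with
  | zero => rfl
  | succ k ih =>
    rw [pow_succ', pow_succ', Module.End.mul_apply, Module.End.mul_apply]
    exact hB.congr_of_degree_lt hα hα' h fun u hu => ih fun t ht => h t (ht.trans hu.le)

theorem hasFiniteSupport_mul_pow_apply_epsW (hB : IsGradedProduct B) (hα : α [] = 0)
    (c : ℕ → ℂ) (s : Sentence A) : (fun k => c k * (B α ^ k) epsW s).HasFiniteSupport :=
  (Set.finite_le_nat s.degree).subset fun k hk => by
    contrapose! hk
    simp [hB.pow_apply_epsW_eq_zero hα (not_le.mp hk)]

theorem productSeries_eq_sum_range (hB : IsGradedProduct B) (hα : α [] = 0) (c : ℕ → ℂ) {N : ℕ}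
    (hN : s.degree < N) :
    productSeries B c α s = ∑ k ∈ Finset.range N, c k * (B α ^ k) epsW s :=
  finsum_eq_sum_of_support_subset _ fun k hk => by
    contrapose! hk
    have hNk : N ≤ k := by simpa using hk
    simp [hB.pow_apply_epsW_eq_zero hα (hN.trans_le hNk)]

theorem productSeries_nil (hB : IsGradedProduct B) (hα : α [] = 0) (c : ℕ → ℂ) :
    productSeries B c α [] = c 0 := by
  rw [hB.productSeries_eq_sum_range hα c (N := 1) (by simp)]
  simp

theorem productSeries_singleton_sub (hB : IsGradedProduct B) (hc : c 1 = 1) (hα : α [] = 0)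
    (hα' : α' [] = 0) {w : WordNE A}
    (h : ∀ t : Sentence A, t.degree < w.1.length → α t = α' t) :
    productSeries B c α [w] - productSeries B c α' [w] = α [w] - α' [w] := by
  have pow_eq {k : ℕ} (hk : k ≠ 1) : (B α ^ k) epsW [w] = (B α' ^ k) epsW [w] := by
    match k with
    | 0 => rfl
    | k + 2 =>
      rw [pow_succ', pow_succ' (B α'), Module.End.mul_apply, Module.End.mul_apply]
      refine hB.congr_of_apply_nil hα hα' (hB.pow_apply_epsW_eq_zero hα (by simp))
        (hB.pow_apply_epsW_eq_zero hα' (by simp)) (by simpa using h) fun u hu => ?_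
      exact hB.pow_apply_epsW_congr hα hα' (fun t ht => h t (by simpa using ht.trans_lt hu)) _
  rw [productSeries, productSeries,
    ← finsum_sub_distrib (hB.hasFiniteSupport_mul_pow_apply_epsW hα c [w])
      (hB.hasFiniteSupport_mul_pow_apply_epsW hα' c [w]),
    finsum_eq_single _ 1 fun k hk => by rw [pow_eq hk, sub_self]]
  simp [hc, hB.apply_epsW]

theorem productSeries_one_eq (hB : IsGradedProduct B) (hα : α [] = 0) :
    productSeries B 1 α = epsW + B α (productSeries B 1 α) := by
  funext s
  have truncate : B α (productSeries B 1 α) s =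
      B α (∑ k ∈ Finset.range s.degree, (B α ^ k) epsW) s :=
    hB.congr_of_degree_lt hα hα (fun _ _ => rfl) fun u hu => by
      simp [hB.productSeries_eq_sum_range hα 1 hu]
  rw [Pi.add_apply, truncate, hB.productSeries_eq_sum_range hα 1 (Nat.lt_succ_self _),
    Finset.sum_range_succ']
  simp [pow_succ', add_comm]

theorem eq_productSeries_one_iff (hB : IsGradedProduct B) (hα : α [] = 0) {Φ : Sentence A → ℂ} :
    Φ = productSeries B 1 α ↔ Φ = epsW + B α Φ := by
  refine ⟨fun h => h ▸ hB.productSeries_one_eq hα, fun h => ?_⟩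
  have causal (f g : Sentence A → ℂ) (s : Sentence A)
      (hfg : ∀ t : Sentence A, t.degree < s.degree → f t = g t) :
      (epsW + B α f : Sentence A → ℂ) s = (epsW + B α g : Sentence A → ℂ) s :=
    congrArg (epsW s + ·) (hB.congr_of_degree_lt hα hα (fun _ _ => rfl) hfg)
  exact (existsUnique_isFixedPt_of_causal (measure Sentence.degree).wf causal).unique h.symm
    (hB.productSeries_one_eq hα).symm

end IsGradedProduct

theorem IsHalfShuffle.isCharW_productSeries_one (hB : IsHalfShuffle B) (hα : IsInfCharW α) :
    IsCharW (productSeries B 1 α) := by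
  set Φ := productSeries B 1 α
  have apply_ne_nil {s : Sentence A} (hs : s ≠ []) : Φ s = B α Φ s := by
    simpa [epsW_of_ne_nil hs] using congrFun (hB.productSeries_one_eq hα.1) s
  have apply_nil : Φ [] = 1 := hB.productSeries_nil hα.1 1
  refine ⟨apply_nil, fun s t => ?_⟩
  induction hn : s.degree using Nat.strong_induction_on generalizing s with
  | _ n ih =>
    obtain rfl | hs := eq_or_ne s []
    · simp [apply_nil]
    calc Φ (s ++ t) = B α (fun x => Φ (x ++ t)) s := by
          rw [apply_ne_nil (by simp [hs]), hB.apply_append hα Φ hs t]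
      _ = B α (Φ t • Φ) s :=
          hB.congr_of_degree_lt hα.1 hα.1 (fun _ _ => rfl) fun u hu => by
            simp [ih _ (hn ▸ hu) u rfl, mul_comm]
      _ = Φ s * Φ t := by
          rw [map_smul, Pi.smul_apply, ← apply_ne_nil hs, smul_eq_mul, mul_comm]

/-- The infinitesimal character with prescribed values on words. -/
def infCharOfWords (f : WordNE A → ℂ) : Sentence A → ℂ
  | [w] => f w
  | _ => 0

theorem isInfCharW_infCharOfWords (f : WordNE A → ℂ) : IsInfCharW (infCharOfWords f) := by
  refine ⟨rfl, fun s t hs ht => ?_⟩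
  obtain ⟨w, s, rfl⟩ := List.exists_cons_of_ne_nil hs
  obtain ⟨v, t, rfl⟩ := List.exists_cons_of_ne_nil ht
  cases s <;> rfl

theorem IsInfCharW.eq_infCharOfWords (hα : IsInfCharW α) :
    α = infCharOfWords fun w => α [w] := by
  funext s
  match s with
  | [] => exact hα.1
  | [_] => rfl
  | v :: w :: s => exact hα.2 [v] (w :: s) (by simp) (by simp)

theorem IsCharW.ext_words {Φ Ψ : Sentence A → ℂ} (hΦ : IsCharW Φ) (hΨ : IsCharW Ψ)
    (h : ∀ w : WordNE A, Φ [w] = Ψ [w]) : Φ = Ψ := by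
  funext s
  induction s with
  | nil => rw [hΦ.1, hΨ.1]
  | cons w s ih => rw [← List.singleton_append, hΦ.2, hΨ.2, h, ih]

theorem infCharOfWords_congr {f f' : WordNE A → ℂ} {s : Sentence A}
    (h : ∀ w : WordNE A, w.1.length ≤ s.degree → f w = f' w) :
    infCharOfWords f s = infCharOfWords f' s := by
  match s with
  | [] => rfl
  | [w] => exact h w (by simp)
  | _ :: _ :: _ => rfl

theorem IsGradedProduct.existsUnique_eq_productSeries (hB : IsGradedProduct B) (hc : c 1 = 1)
    (hchar : ∀ α, IsInfCharW α → IsCharW (productSeries B c α)) {Φ : Sentence A → ℂ}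
    (hΦ : IsCharW Φ) : ∃! α, IsInfCharW α ∧ Φ = productSeries B c α := by
  let G (f : WordNE A → ℂ) (w : WordNE A) : ℂ :=
    Φ [w] - (productSeries B c (infCharOfWords f) [w] - f w)
  have causal (f f' : WordNE A → ℂ) (w : WordNE A)
      (h : ∀ v : WordNE A, v.1.length < w.1.length → f v = f' v) : G f w = G f' w := by
    have hsub := hB.productSeries_singleton_sub hc rfl rfl fun t ht =>
      infCharOfWords_congr (f := f) (f' := f') fun v hv => h v (hv.trans_lt ht)
    simp only [G, sub_right_inj]
    exact sub_eq_sub_iff_sub_eq_sub.mpr hsub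
  have isFixedPt_iff (f : WordNE A → ℂ) :
      Function.IsFixedPt G f ↔ Φ = productSeries B c (infCharOfWords f) := by
    have fixed_at (w : WordNE A) :
        G f w = f w ↔ Φ [w] = productSeries B c (infCharOfWords f) [w] := by
      rw [sub_eq_iff_eq_add, add_sub_cancel]
    refine (funext_iff.trans (forall_congr' fixed_at)).trans
      ⟨hΦ.ext_words (hchar _ (isInfCharW_infCharOfWords f)), fun h w => congrFun h _⟩
  obtain ⟨f, hf, hunique⟩ :=
    existsUnique_isFixedPt_of_causal (measure fun w : WordNE A => w.1.length).wf causal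
  refine ⟨infCharOfWords f, ⟨isInfCharW_infCharOfWords f, (isFixedPt_iff f).mp hf⟩, ?_⟩
  rintro α ⟨hα, hΦα⟩
  rw [hα.eq_infCharOfWords] at hΦα ⊢
  rw [hunique _ ((isFixedPt_iff _).mpr hΦα)]

end Products

section Exponentials

variable {A : Type*} {α : Sentence A → ℂ}

/-- The product of functionals dual to a coproduct with list of terms `C s` on the sentence `s`. -/
noncomputable def cutProduct (C : Sentence A → List (Sentence A × Sentence A)) :
    FunctionalProduct A :=
  LinearMap.mk₂ ℂ (fun f g s => ((C s).map fun p => f p.1 * g p.2).sum)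
    (fun f f' g => funext fun s => by simp [add_mul, List.sum_map_add])
    (fun a f g => funext fun s => by simp [mul_assoc, List.sum_map_mul_left])
    (fun f g g' => funext fun s => by simp [mul_add, List.sum_map_add])
    (fun a f g => funext fun s => by simp [mul_left_comm _ a, List.sum_map_mul_left])

theorem cutProduct_apply (C : Sentence A → List (Sentence A × Sentence A))
    (f g : Sentence A → ℂ) (s : Sentence A) :
    cutProduct C f g s = ((C s).map fun p => f p.1 * g p.2).sum := rfl

variable [Zero A] {F : ∀ w : WordNE A, Finset (Finset (Fin w.1.length))}

theorem isGradedProduct_cutProduct_sentenceCuts :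
    IsGradedProduct (cutProduct (sentenceCuts (A := A))) where
  congr h := congrArg List.sum <| List.map_congr_left fun p hp =>
    h p.1 p.2 (degree_add_degree_of_mem_sentenceCuts hp)
  apply_epsW f w := congrFun (convW_epsW f) [w]

theorem leadingCuts_singleton (F : ∀ w : WordNE A, Finset (Finset (Fin w.1.length)))
    (w : WordNE A) : leadingCuts F [w] = wordCuts w (F w) := by
  simp [leadingCuts, barProd, sentenceCuts]

theorem isHalfShuffle_cutProduct_leadingCuts (hempty : ∀ w, ∅ ∉ F w)
    (huniv : ∀ w, Finset.univ ∈ F w) : IsHalfShuffle (cutProduct (leadingCuts F)) where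
  congr h := congrArg List.sum <| List.map_congr_left fun p hp =>
    h p.1 p.2 (degree_add_degree_of_mem_sentenceCuts (leadingCuts_subset _ hp))
  apply_epsW f w := by
    rw [cutProduct_apply, leadingCuts_singleton, sum_wordCuts_epsW_snd (huniv w)]
  apply_append {α} hα g {s} hs t := by
    rw [cutProduct_apply, leadingCuts_append hs, sum_map_barProd]
    refine congrArg List.sum <| List.map_congr_left fun p hp => ?_
    have hp := epsW_of_ne_nil (fst_ne_nil_of_mem_leadingCuts hempty hp)
    simp only [hα.apply_append p.1, hp, zero_mul, add_zero, mul_assoc, List.sum_map_mul_left]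
    exact congrArg (α p.1 * ·) (congrFun (epsW_convW fun x => g (p.2 ++ x)) t)

theorem isHalfShuffle_flip_cutProduct_leadingCuts (hempty : ∀ w, ∅ ∈ F w)
    (huniv : ∀ w, Finset.univ ∉ F w) : IsHalfShuffle (cutProduct (leadingCuts F)).flip where
  congr h := congrArg List.sum <| List.map_congr_left fun p hp => by
    simpa only [mul_comm] using
      h p.2 p.1 (add_comm p.1.degree _ ▸
        degree_add_degree_of_mem_sentenceCuts (leadingCuts_subset _ hp))
  apply_epsW f w := by
    rw [LinearMap.flip_apply, cutProduct_apply, leadingCuts_singleton,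
      sum_wordCuts_epsW_fst (hempty w)]
  apply_append {α} hα g {s} hs t := by
    rw [LinearMap.flip_apply, cutProduct_apply, leadingCuts_append hs, sum_map_barProd]
    refine congrArg List.sum <| List.map_congr_left fun p hp => ?_
    have hp := epsW_of_ne_nil (snd_ne_nil_of_mem_leadingCuts huniv hp)
    simp only [hα.apply_append p.2, hp, zero_mul, add_zero, mul_left_comm _ (α p.2),
      List.sum_map_mul_left, mul_comm _ (α p.2)]
    exact congrArg (α p.2 * ·) (congrFun (convW_epsW fun x => g (p.1 ++ x)) t)

theorem isHalfShuffle_cutProduct_sentenceCutsPrec :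
    IsHalfShuffle (cutProduct (sentenceCutsPrec (A := A))) :=
  leadingCuts_precPositions (A := A) ▸
    isHalfShuffle_cutProduct_leadingCuts empty_notMem_precPositions univ_mem_precPositions

theorem isHalfShuffle_flip_cutProduct_sentenceCutsSucc :
    IsHalfShuffle (cutProduct (sentenceCutsSucc (A := A))).flip :=
  leadingCuts_succPositions (A := A) ▸
    isHalfShuffle_flip_cutProduct_leadingCuts empty_mem_succPositions univ_notMem_succPositions

theorem convPowW_eq_pow_apply (α : Sentence A → ℂ) (k : ℕ) :
    convPowW α k = (cutProduct sentenceCuts α ^ k) epsW := by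
  induction k with
  | zero => rfl
  | succ k ih => rw [pow_succ', Module.End.mul_apply, ← ih]; rfl

theorem precPowW_eq_pow_apply (α : Sentence A → ℂ) (k : ℕ) :
    precPowW α k = (cutProduct sentenceCutsPrec α ^ k) epsW := by
  induction k with
  | zero => rfl
  | succ k ih => rw [pow_succ', Module.End.mul_apply, ← ih]; rfl

theorem succPowW_eq_pow_apply (α : Sentence A → ℂ) (k : ℕ) :
    succPowW α k = ((cutProduct sentenceCutsSucc).flip α ^ k) epsW := by
  induction k with
  | zero => rfl
  | succ k ih => rw [pow_succ', Module.End.mul_apply, ← ih]; rfl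

theorem expStarW_eq_productSeries (α : Sentence A → ℂ) :
    expStarW α = productSeries (cutProduct sentenceCuts) (fun k => (k.factorial : ℂ)⁻¹) α := by
  funext s
  simp only [expStarW, productSeries, convPowW_eq_pow_apply]

theorem ePrecW_eq_productSeries (α : Sentence A → ℂ) :
    ePrecW α = productSeries (cutProduct sentenceCutsPrec) 1 α := by
  funext s
  simp only [ePrecW, productSeries, precPowW_eq_pow_apply, Pi.one_apply, one_mul]

theorem eSuccW_eq_productSeries (α : Sentence A → ℂ) :
    eSuccW α = productSeries (cutProduct sentenceCutsSucc).flip 1 α := by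
  funext s
  simp only [eSuccW, productSeries, succPowW_eq_pow_apply, Pi.one_apply, one_mul]

theorem IsInfCharW.convW_append (hα : IsInfCharW α) (g : Sentence A → ℂ) (s t : Sentence A) :
    convW α g (s ++ t) = convW α (fun x => g (x ++ t)) s + convW α (fun y => g (s ++ y)) t := by
  have left (x : Sentence A) :
      ((sentenceCuts t).map fun q => epsW q.1 * g (x ++ q.2)).sum = g (x ++ t) :=
    congrFun (epsW_convW fun y => g (x ++ y)) t
  have right :
      ((sentenceCuts s).map fun p => epsW p.1 * convW α (fun y => g (p.2 ++ y)) t).sum =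
        convW α (fun y => g (s ++ y)) t :=
    congrFun (epsW_convW fun x => convW α (fun y => g (x ++ y)) t) s
  rw [← right]
  simp only [convW, sentenceCuts_append, sum_map_barProd, hα.apply_append, add_mul, mul_assoc,
    List.sum_map_add, List.sum_map_mul_left, left]

theorem convW_sum_smul {ι : Type*} (I : Finset ι) (a : ι → ℂ) (f : Sentence A → ℂ)
    (g : ι → Sentence A → ℂ) :
    convW f (∑ i ∈ I, a i • g i) = ∑ i ∈ I, a i • convW f (g i) :=
  (map_sum (cutProduct sentenceCuts f) _ I).trans <|
    Finset.sum_congr rfl fun i _ => map_smul (cutProduct sentenceCuts f) (a i) (g i)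

theorem IsInfCharW.convPowW_append (hα : IsInfCharW α) (k : ℕ) (s t : Sentence A) :
    convPowW α k (s ++ t) = ∑ m ∈ Finset.HasAntidiagonal.antidiagonal k,
      (k.choose m.1 : ℂ) * (convPowW α m.1 s * convPowW α m.2 t) := by
  induction k generalizing s t with
  | zero => simp [convPowW, epsW_append]
  | succ k ih =>
    have expand_left : (fun x => convPowW α k (x ++ t)) =
        ∑ m ∈ Finset.HasAntidiagonal.antidiagonal k,
          ((k.choose m.1 : ℂ) * convPowW α m.2 t) • convPowW α m.1 := by
      funext x
      simp [ih, mul_right_comm, mul_assoc]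
    have expand_right : (fun y => convPowW α k (s ++ y)) =
        ∑ m ∈ Finset.HasAntidiagonal.antidiagonal k,
          ((k.choose m.1 : ℂ) * convPowW α m.1 s) • convPowW α m.2 := by
      funext y
      simp [ih, mul_assoc]
    rw [convPowW, hα.convW_append, expand_left, expand_right, convW_sum_smul, convW_sum_smul,
      Finset.sum_antidiagonal_choose_succ_mul fun i j => convPowW α i s * convPowW α j t, add_comm]
    simp only [Finset.sum_apply, Pi.smul_apply, smul_eq_mul, convPowW]
    congr 1
    · exact Finset.sum_congr rfl fun m _ => mul_assoc _ _ _
    · refine Finset.sum_congr rfl fun m hm => ?_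
      rw [Nat.choose_symm_of_eq_add (Finset.HasAntidiagonal.mem_antidiagonal.mp hm).symm]
      ring

theorem IsInfCharW.isCharW_expStarW (hα : IsInfCharW α) : IsCharW (expStarW α) := by
  have hB := isGradedProduct_cutProduct_sentenceCuts (A := A)
  have finite (s : Sentence A) :
      (fun k => (k.factorial : ℂ)⁻¹ * convPowW α k s).HasFiniteSupport := by
    simpa only [convPowW_eq_pow_apply] using hB.hasFiniteSupport_mul_pow_apply_epsW hα.1 _ s
  refine ⟨?_, fun s t => ?_⟩
  · rw [expStarW_eq_productSeries, hB.productSeries_nil hα.1, Nat.factorial_zero, Nat.cast_one,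
      inv_one]
  · rw [expStarW, expStarW, expStarW,
      finsum_mul_finsum_eq_finsum_sum_antidiagonal (finite s) (finite t)]
    refine finsum_congr fun k => ?_
    rw [hα.convPowW_append, Finset.mul_sum]
    refine Finset.sum_congr rfl fun m hm => ?_
    obtain rfl := Finset.HasAntidiagonal.mem_antidiagonal.mp hm
    have hk : ((m.1 + m.2).factorial : ℂ) ≠ 0 := by exact_mod_cast Nat.factorial_ne_zero _
    rw [Nat.cast_add_choose]
    field_simp

theorem IsInfCharW.isCharW_ePrecW (hα : IsInfCharW α) : IsCharW (ePrecW α) :=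
  ePrecW_eq_productSeries α ▸
    isHalfShuffle_cutProduct_sentenceCutsPrec.isCharW_productSeries_one hα

theorem IsInfCharW.isCharW_eSuccW (hα : IsInfCharW α) : IsCharW (eSuccW α) :=
  eSuccW_eq_productSeries α ▸
    isHalfShuffle_flip_cutProduct_sentenceCutsSucc.isCharW_productSeries_one hα

theorem IsInfCharW.eq_ePrecW_iff (hα : IsInfCharW α) {Φ : Sentence A → ℂ} :
    Φ = ePrecW α ↔ Φ = fun s => epsW s + precW α Φ s :=
  ePrecW_eq_productSeries α ▸
    isHalfShuffle_cutProduct_sentenceCutsPrec.eq_productSeries_one_iff hα.1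

theorem IsInfCharW.eq_eSuccW_iff (hα : IsInfCharW α) {Φ : Sentence A → ℂ} :
    Φ = eSuccW α ↔ Φ = fun s => epsW s + succW Φ α s :=
  eSuccW_eq_productSeries α ▸
    isHalfShuffle_flip_cutProduct_sentenceCutsSucc.eq_productSeries_one_iff hα.1

theorem IsCharW.existsUnique_eq_ePrecW {Φ : Sentence A → ℂ} (hΦ : IsCharW Φ) :
    ∃! κ, IsInfCharW κ ∧ Φ = ePrecW κ := by
  simp only [ePrecW_eq_productSeries]
  have hB := isHalfShuffle_cutProduct_sentenceCutsPrec (A := A)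
  exact hB.existsUnique_eq_productSeries rfl (fun _ => hB.isCharW_productSeries_one) hΦ

theorem IsCharW.existsUnique_eq_eSuccW {Φ : Sentence A → ℂ} (hΦ : IsCharW Φ) :
    ∃! β, IsInfCharW β ∧ Φ = eSuccW β := by
  simp only [eSuccW_eq_productSeries]
  have hB := isHalfShuffle_flip_cutProduct_sentenceCutsSucc (A := A)
  exact hB.existsUnique_eq_productSeries rfl (fun _ => hB.isCharW_productSeries_one) hΦ

theorem IsCharW.existsUnique_eq_expStarW {Φ : Sentence A → ℂ} (hΦ : IsCharW Φ) :
    ∃! ρ, IsInfCharW ρ ∧ Φ = expStarW ρ := by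
  simp only [expStarW_eq_productSeries]
  exact isGradedProduct_cutProduct_sentenceCuts.existsUnique_eq_productSeries (by simp)
    (fun α hα => expStarW_eq_productSeries α ▸ hα.isCharW_expStarW) hΦ

end Exponentials

theorem exists_unique_cumulant_triple_of_character_general (A : Type*) [Zero A] :
    (∀ Φ : Sentence A → ℂ, IsCharW Φ →
      (∃! p : (Sentence A → ℂ) × (Sentence A → ℂ) × (Sentence A → ℂ),
        IsInfCharW p.1 ∧ IsInfCharW p.2.1 ∧ IsInfCharW p.2.2 ∧
        Φ = ePrecW p.1 ∧ Φ = eSuccW p.2.1 ∧ Φ = expStarW p.2.2) ∧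
      (∃! κ : Sentence A → ℂ, IsInfCharW κ ∧
        Φ = fun s => epsW s + precW κ Φ s) ∧
      (∃! β : Sentence A → ℂ, IsInfCharW β ∧
        Φ = fun s => epsW s + succW Φ β s) ∧
      (∀ κ : Sentence A → ℂ, IsInfCharW κ →
        ((Φ = ePrecW κ) ↔ (Φ = fun s => epsW s + precW κ Φ s))) ∧
      (∀ β : Sentence A → ℂ, IsInfCharW β →
        ((Φ = eSuccW β) ↔ (Φ = fun s => epsW s + succW Φ β s)))) ∧
    (∀ α : Sentence A → ℂ, IsInfCharW α →
      IsCharW (expStarW α) ∧ IsCharW (ePrecW α) ∧ IsCharW (eSuccW α)) := by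
  refine ⟨fun Φ hΦ => ?_, fun α hα => ⟨hα.isCharW_expStarW, hα.isCharW_ePrecW, hα.isCharW_eSuccW⟩⟩
  have prec_iff (κ) (hκ : IsInfCharW κ) := hκ.eq_ePrecW_iff (Φ := Φ)
  have succ_iff (β) (hβ : IsInfCharW β) := hβ.eq_eSuccW_iff (Φ := Φ)
  have hprec := hΦ.existsUnique_eq_ePrecW
  have hsucc := hΦ.existsUnique_eq_eSuccW
  refine ⟨?_, ?_, ?_, prec_iff, succ_iff⟩
  · obtain ⟨κ, ⟨hκ, hκΦ⟩, κ_unique⟩ := hprec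
    obtain ⟨β, ⟨hβ, hβΦ⟩, β_unique⟩ := hsucc
    obtain ⟨ρ, ⟨hρ, hρΦ⟩, ρ_unique⟩ := hΦ.existsUnique_eq_expStarW
    refine ⟨(κ, β, ρ), ⟨hκ, hβ, hρ, hκΦ, hβΦ, hρΦ⟩, ?_⟩
    rintro ⟨κ', β', ρ'⟩ ⟨hκ', hβ', hρ', hκΦ', hβΦ', hρΦ'⟩
    rw [κ_unique κ' ⟨hκ', hκΦ'⟩, β_unique β' ⟨hβ', hβΦ'⟩, ρ_unique ρ' ⟨hρ', hρΦ'⟩]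
  · simpa only [and_congr_right (prec_iff _)] using hprec
  · simpa only [and_congr_right (succ_iff _)] using hsucc

/-- For every character `Φ` on the double tensor algebra `T(T_+(A))`
there exists a unique triple `(κ, β, ρ)` of infinitesimal characters such that
`Φ = exp^*(ρ) = E_≺(κ) = E_≻(β)`; in particular `κ` and `β` are the unique solutions of
the fixed-point equations `Φ = ε + κ ≺ Φ` and `Φ = ε + Φ ≻ β`. Conversely, for every
infinitesimal character `α`, each of `exp^*(α)`, `E_≺(α)`, `E_≻(α)` is a character. -/
theorem exists_unique_cumulant_triple_of_character
    (A : Type*) [AddCommGroup A] [Module ℂ A] :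
    (∀ Φ : Sentence A → ℂ, IsCharW Φ →
      (∃! p : (Sentence A → ℂ) × (Sentence A → ℂ) × (Sentence A → ℂ),
        IsInfCharW p.1 ∧ IsInfCharW p.2.1 ∧ IsInfCharW p.2.2 ∧
        Φ = ePrecW p.1 ∧ Φ = eSuccW p.2.1 ∧ Φ = expStarW p.2.2) ∧
      (∃! κ : Sentence A → ℂ, IsInfCharW κ ∧
        Φ = fun s => epsW s + precW κ Φ s) ∧
      (∃! β : Sentence A → ℂ, IsInfCharW β ∧
        Φ = fun s => epsW s + succW Φ β s) ∧
      (∀ κ : Sentence A → ℂ, IsInfCharW κ →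
        ((Φ = ePrecW κ) ↔ (Φ = fun s => epsW s + precW κ Φ s))) ∧
      (∀ β : Sentence A → ℂ, IsInfCharW β →
        ((Φ = eSuccW β) ↔ (Φ = fun s => epsW s + succW Φ β s)))) ∧
    (∀ α : Sentence A → ℂ, IsInfCharW α →
      IsCharW (expStarW α) ∧ IsCharW (ePrecW α) ∧ IsCharW (eSuccW α)) :=
  exists_unique_cumulant_triple_of_character_general A
end
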